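/- arXiv:2102.03737 — 2 statements merged into one kernel-verified Lean document; each statement's English description precedes it below -/
import Mathlib

section
/- Let (S,d) and (X,d_X) be compact metric spaces, F:S→S and g:X→X Borel measurable maps, μ_g a g-invariant Borel probability measure on X, and s:X→S, q:S→X Borel measurable maps with q∘F=g∘q on S and q∘s=id_X. Assume that sup_{z∈S} d(Fⁿ(z), Fⁿ(s(q(z)))) → 0 as n→∞. Then for every continuous ψ:S→ℝ the sequence (∫_X ψ(Fⁿ(s(x))) dμ_g(x))_{n≥0} is Cauchy, hence converges, and there exists a unique Borel probability measure μ_F on S such that ∫ψ dμ_F = lim_{n→∞} ∫_X ψ(Fⁿ(s(x))) dμ_g(x) for every continuous ψ:S→ℝ. -/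
open MeasureTheory Set Filter Topology
open scoped ENNReal

noncomputable section

/-!
Invariance of `μ` under `g` gives `∫ φ (s x) ∂μ = ∫ φ (s (g^[k] x)) ∂μ`, and `s (g^[k] x)` is the
base point of the fiber of `q` through `F^[k] (s x)`. With `φ = ψ ∘ F^[n]`, the integrals of
`ψ ∘ F^[n + k] ∘ s` and `ψ ∘ F^[n] ∘ s` therefore differ by at most the oscillation of `ψ ∘ F^[n]`
between points and their base points, which is small for large `n` uniformly in `k`. Compactness of
the space of probability measures turns the resulting limits of integrals into a limit measure.
-/

section UniformDistance

variable {α β γ ι : Type*} [PseudoMetricSpace β] [PseudoMetricSpace γ]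

theorem dist_le_iSup_dist [BoundedSpace β] (f g : α → β) (a : α) :
    dist (f a) (g a) ≤ ⨆ b, dist (f b) (g b) :=
  (UniformFun.dist_le (f := UniformFun.ofFun f) (g := UniformFun.ofFun g)
    (Real.iSup_nonneg fun _ => dist_nonneg)).1 le_rfl a

theorem eventually_forall_dist_comp_lt [BoundedSpace β] {φ : β → γ} (hφ : UniformContinuous φ)
    {l : Filter ι} {f g : ι → α → β} (hfg : Tendsto (fun i => ⨆ a, dist (f i a) (g i a)) l (𝓝 0))
    {ε : ℝ} (hε : 0 < ε) :
    ∀ᶠ i in l, ∀ a, dist (φ (f i a)) (φ (g i a)) < ε := by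
  obtain ⟨δ, hδ, hφδ⟩ := Metric.uniformContinuous_iff.1 hφ ε hε
  filter_upwards [hfg.eventually_lt_const hδ] with i hi a
  exact hφδ ((dist_le_iSup_dist (f i) (g i) a).trans_lt hi)

end UniformDistance

section Integral

variable {S X E : Type*} [MeasurableSpace X] {μ : Measure X} [NormedAddCommGroup E]

theorem integrable_continuous_comp [TopologicalSpace S] [CompactSpace S] [MeasurableSpace S]
    [OpensMeasurableSpace S] [SecondCountableTopologyEither S E] [IsFiniteMeasure μ]
    {ψ : S → E} (hψ : Continuous ψ) {f : X → S} (hf : AEMeasurable f μ) :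
    Integrable (fun x => ψ (f x)) μ := by
  obtain ⟨C, hC⟩ := isCompact_univ.exists_bound_of_continuousOn hψ.continuousOn
  exact Integrable.of_bound (hψ.stronglyMeasurable.aestronglyMeasurable.comp_aemeasurable hf) C
    (ae_of_all _ fun x => hC (f x) (mem_univ _))

variable [NormedSpace ℝ E] [IsProbabilityMeasure μ]

theorem dist_integral_le_of_ae_dist_le {f g : X → E} (hf : Integrable f μ) (hg : Integrable g μ)
    {C : ℝ} (hC : ∀ᵐ x ∂μ, dist (f x) (g x) ≤ C) :
    dist (∫ x, f x ∂μ) (∫ x, g x ∂μ) ≤ C := by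
  simp only [dist_eq_norm] at hC
  rw [dist_eq_norm, ← integral_sub hf hg]
  simpa only [probReal_univ, mul_one] using norm_integral_le_of_norm_le_const hC

theorem dist_integral_comp_section_le {F : S → S} {g : X → X} {s : X → S} {q : S → X}
    (hg : MeasurePreserving g μ μ) (hqF : Function.Semiconj q F g)
    (hqs : Function.LeftInverse q s) {φ : S → E}
    (hφFs : Integrable (fun x => φ (F (s x))) μ) (hφs : Integrable (fun x => φ (s x)) μ)
    {C : ℝ} (hC : ∀ z, dist (φ z) (φ (s (q z))) ≤ C) :
    dist (∫ x, φ (F (s x)) ∂μ) (∫ x, φ (s x) ∂μ) ≤ C := by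
  have base_point (x : X) : s (q (F (s x))) = s (g x) := by rw [hqF.eq, hqs]
  have invariance : ∫ x, φ (s (g x)) ∂μ = ∫ x, φ (s x) ∂μ := by
    rw [← integral_map (f := fun x => φ (s x)) hg.aemeasurable
      (hg.map_eq.symm ▸ hφs.aestronglyMeasurable), hg.map_eq]
  rw [← invariance]
  refine dist_integral_le_of_ae_dist_le hφFs (hg.integrable_comp_of_integrable hφs)
    (ae_of_all _ fun x => ?_)
  simpa only [Function.comp_apply, base_point] using hC (F (s x))

theorem cauchySeq_integral_iterate_section [PseudoMetricSpace S] [CompactSpace S]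
    [MeasurableSpace S] [OpensMeasurableSpace S] {F : S → S} {g : X → X} {s : X → S} {q : S → X}
    (hF : Measurable F) (hg : MeasurePreserving g μ μ) (hs : AEMeasurable s μ)
    (hqF : Function.Semiconj q F g) (hqs : Function.LeftInverse q s)
    (hcontr : Tendsto (fun n : ℕ => ⨆ z, dist (F^[n] z) (F^[n] (s (q z)))) atTop (𝓝 0))
    {ψ : S → E} (hψ : Continuous ψ) :
    CauchySeq fun n : ℕ => ∫ x, ψ (F^[n] (s x)) ∂μ := by
  have integrable_iterate (n : ℕ) : Integrable (fun x => ψ (F^[n] (s x))) μ :=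
    integrable_continuous_comp hψ ((hF.iterate n).comp_aemeasurable hs)
  refine Metric.cauchySeq_iff'.2 fun ε hε => ?_
  obtain ⟨N, hN⟩ := (eventually_forall_dist_comp_lt
    (CompactSpace.uniformContinuous_of_continuous hψ) hcontr (half_pos hε)).exists
  refine ⟨N, fun n hn => ?_⟩
  obtain ⟨k, rfl⟩ := Nat.exists_eq_add_of_le hn
  have integrable_add : Integrable (fun x => ψ (F^[N] (F^[k] (s x)))) μ := by
    simpa only [Function.iterate_add_apply] using integrable_iterate (N + k)
  calc dist (∫ x, ψ (F^[N + k] (s x)) ∂μ) (∫ x, ψ (F^[N] (s x)) ∂μ)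
    _ = dist (∫ x, ψ (F^[N] (F^[k] (s x))) ∂μ) (∫ x, ψ (F^[N] (s x)) ∂μ) := by
      simp only [Function.iterate_add_apply]
    _ ≤ ε / 2 :=
      dist_integral_comp_section_le (φ := fun z => ψ (F^[N] z)) (hg.iterate k)
        (hqF.iterate_right k) hqs integrable_add (integrable_iterate N) fun z => (hN z).le
    _ < ε := half_lt_self hε

end Integral

section LimitMeasure

variable {S X ι : Type*} [TopologicalSpace S] [CompactSpace S] [MeasurableSpace S] [BorelSpace S]
  {l : Filter ι} [NeBot l]

theorem exists_probabilityMeasure_tendsto_integral [T2Space S] (ν : ι → ProbabilityMeasure S)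
    (hν : ∀ ψ : S → ℝ, Continuous ψ → Cauchy (map (fun i => ∫ z, ψ z ∂(ν i : Measure S)) l)) :
    ∃ ν' : ProbabilityMeasure S, ∀ ψ : S → ℝ, Continuous ψ →
      Tendsto (fun i => ∫ z, ψ z ∂(ν i : Measure S)) l (𝓝 (∫ z, ψ z ∂(ν' : Measure S))) := by
  obtain ⟨ν', hν'⟩ := exists_clusterPt_of_compactSpace (map ν l)
  refine ⟨ν', fun ψ hψ => le_nhds_of_cauchy_adhp (hν ψ hψ) ?_⟩
  have continuous_integral :
      Continuous fun m : ProbabilityMeasure S => ∫ z, ψ z ∂(m : Measure S) :=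
    ProbabilityMeasure.continuous_integral_boundedContinuousFunction
      (BoundedContinuousFunction.mkOfCompact ⟨ψ, hψ⟩)
  exact MapClusterPt.continuousAt_comp continuous_integral.continuousAt hν'

theorem existsUnique_measure_tendsto_integral_comp [T2Space S] [HasOuterApproxClosed S]
    [MeasurableSpace X] {μ : Measure X} [IsProbabilityMeasure μ]
    {Y : ι → X → S} (hY : ∀ i, AEMeasurable (Y i) μ)
    (hcauchy : ∀ ψ : S → ℝ, Continuous ψ → Cauchy (map (fun i => ∫ x, ψ (Y i x) ∂μ) l)) :
    ∃! ν : Measure S, IsProbabilityMeasure ν ∧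
      ∀ ψ : S → ℝ, Continuous ψ → Tendsto (fun i => ∫ x, ψ (Y i x) ∂μ) l (𝓝 (∫ z, ψ z ∂ν)) := by
  let law (i : ι) : ProbabilityMeasure S :=
    ⟨μ.map (Y i), Measure.isProbabilityMeasure_map (hY i)⟩
  have integral_law {ψ : S → ℝ} (hψ : Continuous ψ) (i : ι) :
      ∫ z, ψ z ∂(law i : Measure S) = ∫ x, ψ (Y i x) ∂μ :=
    integral_map (hY i) hψ.aestronglyMeasurable
  obtain ⟨ν, hν⟩ := exists_probabilityMeasure_tendsto_integral law fun ψ hψ => by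
    simpa only [integral_law hψ] using hcauchy ψ hψ
  have tendsto_ν (ψ : S → ℝ) (hψ : Continuous ψ) :
      Tendsto (fun i => ∫ x, ψ (Y i x) ∂μ) l (𝓝 (∫ z, ψ z ∂(ν : Measure S))) := by
    simpa only [integral_law hψ] using hν ψ hψ
  refine ⟨ν, ⟨inferInstance, tendsto_ν⟩, ?_⟩
  rintro ν' ⟨_, tendsto_ν'⟩
  exact ext_of_forall_integral_eq_of_IsFiniteMeasure fun ψ =>
    tendsto_nhds_unique (tendsto_ν' ψ ψ.continuous) (tendsto_ν ψ ψ.continuous)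

end LimitMeasure

theorem lifting_construction_general {S X : Type*} [MetricSpace S] [CompactSpace S]
    [MeasurableSpace S] [BorelSpace S] [MeasurableSpace X]
    {F : S → S} {g : X → X} (hF : Measurable F)
    {μ : Measure X} [IsProbabilityMeasure μ] (hg : MeasurePreserving g μ μ)
    {s : X → S} {q : S → X} (hs : AEMeasurable s μ)
    (hqF : Function.Semiconj q F g) (hqs : Function.LeftInverse q s)
    (hcontr : Tendsto (fun n : ℕ => ⨆ z, dist (F^[n] z) (F^[n] (s (q z)))) atTop (𝓝 0)) :
    (∀ ψ : S → ℝ, Continuous ψ → CauchySeq (fun n : ℕ => ∫ x, ψ (F^[n] (s x)) ∂μ)) ∧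
    ∃! ν : Measure S, IsProbabilityMeasure ν ∧
      ∀ ψ : S → ℝ, Continuous ψ →
        Tendsto (fun n : ℕ => ∫ x, ψ (F^[n] (s x)) ∂μ) atTop (𝓝 (∫ z, ψ z ∂ν)) := by
  have hcauchy (ψ : S → ℝ) (hψ : Continuous ψ) :=
    cauchySeq_integral_iterate_section hF hg hs hqF hqs hcontr hψ
  exact ⟨hcauchy, existsUnique_measure_tendsto_integral_comp
    (fun n => (hF.iterate n).comp_aemeasurable hs) hcauchy⟩

/-- The abstract lifting construction: given a factor map `q` intertwining `F` with `g`,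
a section `s` of `q`, a `g`-invariant probability measure `μ_g`, and uniform asymptotic
contraction of `F` along the fibers joining `z` to `s(q(z))`, the integrals
`∫ ψ(Fⁿ(s(x))) dμ_g` form a Cauchy sequence for every continuous `ψ`, and there is a unique
Borel probability measure `μ_F` representing their limits. -/
theorem lifting_construction
    {S X : Type*} [MetricSpace S] [CompactSpace S]
    [MeasurableSpace S] [BorelSpace S]
    [MetricSpace X] [CompactSpace X] [MeasurableSpace X] [BorelSpace X]
    (F : S → S) (g : X → X) (hF : Measurable F) (hg : Measurable g)
    (μg : Measure X) [IsProbabilityMeasure μg]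
    (hinv : ∀ A : Set X, MeasurableSet A → μg (g ⁻¹' A) = μg A)
    (s : X → S) (q : S → X) (hs : Measurable s) (hq : Measurable q)
    (hqF : ∀ z : S, q (F z) = g (q z)) (hqs : ∀ x : X, q (s x) = x)
    (hcontr : Tendsto (fun n : ℕ => ⨆ z : S, dist (F^[n] z) (F^[n] (s (q z)))) atTop (𝓝 0)) :
    (∀ ψ : S → ℝ, Continuous ψ → CauchySeq (fun n : ℕ => ∫ x, ψ (F^[n] (s x)) ∂μg)) ∧
    ∃! μF : Measure S, IsProbabilityMeasure μF ∧
      ∀ ψ : S → ℝ, Continuous ψ →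
        Tendsto (fun n : ℕ => ∫ x, ψ (F^[n] (s x)) ∂μg) atTop (𝓝 (∫ z, ψ z ∂μF)) :=
  lifting_construction_general hF
    ⟨hg, Measure.ext fun A hA => (Measure.map_apply hg hA).trans (hinv A hA)⟩
    hs.aemeasurable hqF hqs hcontr
end
end

section
/- Let 1/2<b<a<1 and consider the piecewise affine generalized horseshoe map F on [0,1]² with two strips S₁=[0,1/2]×[0,1] and S₂=[1/2,1]×[0,1], given by F(x,y) = (2x, (a+2x(b−a))y + (1−a)·2x·(a−b)) for (x,y)∈S₁ and F(x,y) = (2x−1, (a+(2x−1)(b−a))y) for (x,y)∈S₂. Then F satisfies the transversality condition: there exists δ>0 such that limsup_{r→0} r⁻² Σ_{([A]_n,[B]_n)∈M_δ^{NTr}(r)} vol(U_{[A]_n}∩U_{[B]_n})·|I_{[A]_n}|·|I_{[B]_n}| < ∞. -/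
open MeasureTheory Set Filter Topology
open scoped ENNReal

noncomputable section

namespace AffineHorseshoe

/-- Points of the plane. -/
abbrev Pt : Type := ℝ × ℝ

/-- The unit square `S = [0,1]²`. -/
def unitSq : Set Pt := Icc (0:ℝ) 1 ×ˢ Icc (0:ℝ) 1

/-- Arclength via one-dimensional Hausdorff measure. -/
def len (s : Set Pt) : ℝ≥0∞ := μH[1] s

/-- The two strips `S₁ = [0,1/2]×[0,1]` and `S₂ = [1/2,1]×[0,1]`. -/
def Sbr : ℕ → Set Pt
  | 1 => Icc (0:ℝ) (1/2) ×ˢ Icc (0:ℝ) 1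
  | _ => Icc (1/2:ℝ) 1 ×ˢ Icc (0:ℝ) 1

/-- The two affine branches of the map. -/
def Fbr (a b : ℝ) : ℕ → Pt → Pt
  | 1 => fun p => (2 * p.1, (a + 2 * p.1 * (b - a)) * p.2 + (1 - a) * (2 * p.1) * (a - b))
  | _ => fun p => (2 * p.1 - 1, (a + (2 * p.1 - 1) * (b - a)) * p.2)

/-- `S_{[A]_n}`. -/
def wordS (a b : ℝ) : List ℕ → Set Pt
  | [] => unitSq
  | [i] => Sbr i
  | i :: rest => Sbr i ∩ Fbr a b i ⁻¹' wordS a b rest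

/-- `F_{[A]_n} = F_{a_n} ∘ ⋯ ∘ F_{a₁}`. -/
def wordF (a b : ℝ) : List ℕ → Pt → Pt
  | [] => id
  | i :: rest => wordF a b rest ∘ Fbr a b i

/-- `U_{[A]_n} = F_{[A]_n}(S_{[A]_n})`. -/
def wordU (a b : ℝ) (w : List ℕ) : Set Pt := wordF a b w '' wordS a b w

/-- The prefix `[A]_n` of an infinite word. -/
def prefixWord (A : ℕ → ℕ) (n : ℕ) : List ℕ := List.ofFn (fun i : Fin n => A i)

/-- The unstable manifold `W^u_A = ⋂_{n≥1} U_{[A]_n}`. -/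
def leafU (a b : ℝ) (A : ℕ → ℕ) : Set Pt := ⋂ n : ℕ, wordU a b (prefixWord A (n + 1))

/-- The (vertical) stable leaf `W^s(x) = {x}×[0,1]`. -/
def Ws (x : ℝ) : Set Pt := {x} ×ˢ Icc (0:ℝ) 1

/-- `d([A]_n)`: the maximal height of the vertical sections of `U_{[A]_n}`. -/
def dW (a b : ℝ) (w : List ℕ) : ℝ≥0∞ := ⨆ x ∈ Icc (0:ℝ) 1, len (wordU a b w ∩ Ws x)

/-- `I_{[A]_n}`: the vertical projection of `S_{[A]_n}` (a dyadic interval). -/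
def IWord (a b : ℝ) (w : List ℕ) : Set ℝ := Prod.fst '' wordS a b w

open Classical in
/-- The intersection point `W^u_A(x) = W^u_A ∩ W^s(x)`. -/
def uPoint (a b : ℝ) (A : ℕ → ℕ) (x : ℝ) : Pt :=
  if h : (leafU a b A ∩ Ws x).Nonempty then h.choose else (x, 0)

/-- Continuation of a finite word by an infinite one. -/
def extendWord (w : List ℕ) (A : ℕ → ℕ) : ℕ → ℕ :=
  fun n => if h : n < w.length then w.get ⟨n, h⟩ else A (n - w.length)

/-- `δ`-transversality of two infinite words. -/
def TransversalInf (a b δ : ℝ) (A B : ℕ → ℕ) : Prop :=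
  ∀ᵐ x ∂(volume.restrict (Icc (0:ℝ) 1)),
    δ < dist (uPoint a b A x) (uPoint a b B x) ∨
    δ < ‖deriv (fun t => uPoint a b A t) x - deriv (fun t => uPoint a b B t) x‖

/-- `δ`-transversality of two finite words: all their infinite continuations (by words in
the alphabet `{1,2}`) are `δ`-transversal. -/
def TransversalFin (a b δ : ℝ) (w₁ w₂ : List ℕ) : Prop :=
  ∀ A B : ℕ → ℕ, (∀ k, A k = 1 ∨ A k = 2) → (∀ k, B k = 1 ∨ B k = 2) →
    TransversalInf a b δ (extendWord w₁ A) (extendWord w₂ B)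

/-- `M(r)`: truncations `[A]_n` of infinite words over `{1,2}` at the largest `n` with
`d([A]_n) ≥ r`. -/
def Mset (a b r : ℝ) : Set (List ℕ) :=
  {w | ∃ A : ℕ → ℕ, (∀ k, A k = 1 ∨ A k = 2) ∧ ∃ n : ℕ,
    w = prefixWord A (n + 1) ∧ ENNReal.ofReal r ≤ dW a b w ∧
    ∀ m, n + 1 < m → dW a b (prefixWord A m) < ENNReal.ofReal r}

open Classical in
/-- The sum over non-`δ`-transversal pairs in `M(r)²` of
`vol(U_{[A]_n} ∩ U_{[B]_n})·|I_{[A]_n}|·|I_{[B]_n}|`. -/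
def NTrSum (a b δ r : ℝ) : ℝ≥0∞ :=
  ∑' p : List ℕ × List ℕ,
    if p.1 ∈ Mset a b r ∧ p.2 ∈ Mset a b r ∧ ¬ TransversalFin a b δ p.1 p.2 then
      volume (wordU a b p.1 ∩ wordU a b p.2) * volume (IWord a b p.1) * volume (IWord a b p.2)
    else 0

/-!
The strip `U_w` is the region over `[0,1]` between two graphs. Its height over `x` is a product of
contraction rates that do not depend on the branches, so all sections of a strip have comparable
heights, and those of the strips of `M(r)` are comparable to `r`.

Averaging the normalised Lebesgue measures on the slices over `x` of the strips of length `n` gives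
a probability density; its energy is the integral of its square. Splitting the words by their newest
symbol expresses the energy over `x` through the energies over `x / 2` and `(x + 1) / 2`, with
factor `1 / (4 * rate)`, and a cross term. For small `x` the cross term is absorbed by Young's
inequality with a weight ratio `R`. For the remaining `x` the two branches are transversal: the gap
between the lower boundaries, times a positive factor, has derivative bounded below, so the
parameters where two strips come within `m` of each other have measure `O(m)` and the cross term has
bounded integral. With the weights `1` and `R` below and above the threshold the integrated energies
satisfy `s (n + 1) ≤ κ * s n + C` with `κ < 1`, hence are bounded.

The sum over all pairs of words of `M(r)` is at most the squared `L²`-norm of the weighted number of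
strips of `M(r)` through a point. That number is at most a constant times the integral of the
density of a long enough word length over a window of size comparable to `r`, and Cauchy–Schwarz
bounds the squared norm by `O(r²)` times an energy.
-/

/-! ### Integrals and recursions in `ℝ≥0∞` -/

lemma le_of_le_mul_add {s : ℕ → ℝ≥0∞} {κ C : ℝ≥0∞} (hκ : κ < 1)
    (h : ∀ n, s (n + 1) ≤ κ * s n + C) (n : ℕ) : s n ≤ s 0 + C * (1 - κ)⁻¹ := by
  have hgeom : κ * (1 - κ)⁻¹ + 1 = (1 - κ)⁻¹ := by
    calc κ * (1 - κ)⁻¹ + 1 = κ * (1 - κ)⁻¹ + (1 - κ) * (1 - κ)⁻¹ := by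
          rw [ENNReal.mul_inv_cancel (tsub_pos_of_lt hκ).ne' (by finiteness)]
      _ = (1 - κ)⁻¹ := by rw [← add_mul, add_tsub_cancel_of_le hκ.le, one_mul]
  induction n with
  | zero => exact le_self_add
  | succ n ih =>
    calc s (n + 1) ≤ κ * (s 0 + C * (1 - κ)⁻¹) + C := by grw [h n, ih]
      _ = κ * s 0 + C * (κ * (1 - κ)⁻¹ + 1) := by ring
      _ ≤ s 0 + C * (1 - κ)⁻¹ := by
        rw [hgeom]
        gcongr
        exact mul_le_of_le_one_left' hκ.le

lemma two_mul_mul_le_of_mul_eq_one {R S : ℝ≥0∞} (hRS : R * S = 1) (p q : ℝ≥0∞) :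
    2 * (p * q) ≤ S * p ^ 2 + R * q ^ 2 := by
  have amgm (x y : ℝ≥0∞) : 2 * (x * y) ≤ x ^ 2 + y ^ 2 := by
    rcases le_total x y with h | h
    all_goals
      obtain ⟨c, rfl⟩ := exists_add_of_le h
      ring_nf
      exact le_self_add
  calc 2 * (p * q) = (R * S) * (2 * (p * q)) := by rw [hRS, one_mul]
    _ = S * (2 * (p * (R * q))) := by ring
    _ ≤ S * (p ^ 2 + (R * q) ^ 2) := by grw [amgm]
    _ = S * p ^ 2 + R * S * (R * q ^ 2) := by ring
    _ = S * p ^ 2 + R * q ^ 2 := by rw [hRS, one_mul]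

lemma sq_lintegral_le {α : Type*} [MeasurableSpace α] {μ : Measure α} {f : α → ℝ≥0∞}
    (hf : AEMeasurable f μ) : (∫⁻ x, f x ∂μ) ^ 2 ≤ μ univ * ∫⁻ x, f x ^ 2 ∂μ := by
  have hsqrt (c : ℝ≥0∞) : (c ^ (1 / 2 : ℝ)) ^ 2 = c := by
    rw [← ENNReal.rpow_natCast, ← ENNReal.rpow_mul]; norm_num
  have hölder := ENNReal.lintegral_mul_le_Lp_mul_Lq μ Real.HolderConjugate.two_two
    (aemeasurable_const (b := (1 : ℝ≥0∞))) hf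
  simp only [Pi.mul_apply, one_mul, lintegral_const, ENNReal.rpow_two, one_pow] at hölder
  exact (pow_le_pow_left' hölder 2).trans_eq (by rw [mul_pow, hsqrt, hsqrt])

lemma lintegral_setLIntegral_add {G : Type*} [MeasurableSpace G] [AddGroup G] [MeasurableAdd₂ G]
    {μ : Measure G} [μ.IsAddRightInvariant] [SFinite μ] {f : G → ℝ≥0∞}
    (hf : Measurable f) (s : Set G) : ∫⁻ z, ∫⁻ t in s, f (z + t) ∂μ ∂μ = μ s * ∫⁻ z, f z ∂μ := by
  rw [lintegral_lintegral_swap (by fun_prop)]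
  simp only [lintegral_add_right_eq_self, lintegral_const, Measure.restrict_apply_univ, mul_comm]

lemma lintegral_image_mul_add {c : ℝ} (hc : 0 < c) (d : ℝ) (f : ℝ → ℝ≥0∞) {s : Set ℝ}
    (hs : MeasurableSet s) :
    ∫⁻ z in (fun z => c * z + d) '' s, f z = ENNReal.ofReal c * ∫⁻ z in s, f (c * z + d) := by
  have hderiv (z : ℝ) : HasDerivAt (fun z => c * z + d) c z := by
    simpa using ((hasDerivAt_id z).const_mul c).add_const d
  rw [lintegral_image_eq_lintegral_abs_deriv_mul hs (fun z _ => (hderiv z).hasDerivWithinAt)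
    (fun y _ z _ h => by simpa [hc.ne'] using h),
    lintegral_const_mul' _ _ ENNReal.ofReal_ne_top, abs_of_pos hc]

lemma lintegral_Ioc_comp_half_add {f : ℝ → ℝ≥0∞} (hf : Measurable f) :
    ∫⁻ u in Ioc (0 : ℝ) 1, (f (u / 2) + f ((u + 1) / 2)) = 2 * ∫⁻ u in Ioc (0 : ℝ) 1, f u := by
  have half (d : ℝ) : 2 * ∫⁻ u in Ioc (d / 2) ((d + 1) / 2), f u =
      ∫⁻ u in Ioc (0 : ℝ) 1, f ((u + d) / 2) := by
    have himage : (fun z => 2⁻¹ * z + d / 2) '' Ioc (0 : ℝ) 1 = Ioc (d / 2) ((d + 1) / 2) := by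
      rw [image_affine_Ioc (by norm_num)]; congr 1 <;> ring
    rw [← himage, lintegral_image_mul_add (by norm_num) _ _ measurableSet_Ioc, ← mul_assoc,
      ENNReal.ofReal_inv_of_pos two_pos, ENNReal.ofReal_ofNat,
      ENNReal.mul_inv_cancel two_ne_zero ENNReal.ofNat_ne_top, one_mul]
    exact lintegral_congr fun u => by ring_nf
  have h₀ := half 0
  have h₁ := half 1
  norm_num at h₀ h₁
  rw [lintegral_add_left (by fun_prop), ← h₀, ← h₁, ← mul_add,
    ← lintegral_union measurableSet_Ioc (Ioc_disjoint_Ioc_of_le le_rfl),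
    Ioc_union_Ioc_eq_Ioc (by norm_num) (by norm_num)]

lemma volume_abs_le_le_of_le_deriv {s : Set ℝ} (hs : Convex ℝ s) {f : ℝ → ℝ} {k M : ℝ} (hk : 0 < k)
    (hf : ContinuousOn f s) (hf' : DifferentiableOn ℝ f (interior s))
    (hderiv : ∀ x ∈ interior s, k ≤ deriv f x) :
    volume {x ∈ s | |f x| ≤ M} ≤ ENNReal.ofReal (2 * M / k) := by
  refine (Real.volume_le_diam _).trans (Metric.ediam_le ?_)
  have key : ∀ x ∈ s, ∀ y ∈ s, |f x| ≤ M → |f y| ≤ M → x ≤ y → y - x ≤ 2 * M / k := by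
    intro x hx y hy hfx hfy hxy
    have hgrowth := hs.mul_sub_le_image_sub_of_le_deriv hf hf' hderiv x hx y hy hxy
    rw [le_div_iff₀' hk]
    linarith [(abs_le.1 hfx).1, (abs_le.1 hfy).2]
  rintro x ⟨hx, hfx⟩ y ⟨hy, hfy⟩
  rw [edist_dist, Real.dist_eq]
  refine ENNReal.ofReal_le_ofReal (abs_le.2 ?_)
  rcases le_total x y with h | h
  · exact ⟨by linarith [key x hx y hy hfx hfy h], by linarith [key x hx y hy hfx hfy h]⟩
  · exact ⟨by linarith [key y hy x hx hfy hfx h], by linarith [key y hy x hx hfy hfx h]⟩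

/-! ### Strips -/

/-- The binary digit attached to a symbol of the alphabet `{1, 2}`. -/
def digit (i : ℕ) : ℝ := if i = 1 then 0 else 1

/-- The inverse branches of the base map `x ↦ 2x mod 1`. -/
def invBranch (i : ℕ) (x : ℝ) : ℝ := (x + digit i) / 2

/-- The vertical contraction rate of `F` over the fibre that is mapped onto `{x} × [0,1]`; it does
not depend on the branch. -/
def rate (a b x : ℝ) : ℝ := a - (a - b) * x

/-- The branch with symbol `i` translates the fibre that it maps onto `{x} × [0,1]` by
`offset a b i * x`. -/
def offset (a b : ℝ) (i : ℕ) : ℝ := (1 - a) * (a - b) * (1 - digit i)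

/-- The lower boundary of the strip `U_w`, as a function on `[0,1]`. Here, as for `height`, the
word is listed from the newest symbol to the oldest one, that is, in the order opposite to `wordU`.
-/
def lower (a b : ℝ) : List ℕ → ℝ → ℝ
  | [], _ => 0
  | i :: v, x => offset a b i * x + rate a b x * lower a b v (invBranch i x)

/-- The height of the strip `U_w`, as a function on `[0,1]`. -/
def height (a b : ℝ) : List ℕ → ℝ → ℝ
  | [], _ => 1
  | i :: v, x => rate a b x * height a b v (invBranch i x)

section Continuity

variable (a b : ℝ)

@[fun_prop]
lemma continuous_rate : Continuous (rate a b) := by unfold rate; fun_prop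

@[fun_prop]
lemma continuous_invBranch (i : ℕ) : Continuous (invBranch i) := by unfold invBranch; fun_prop

@[fun_prop]
lemma continuous_lower (v : List ℕ) : Continuous (lower a b v) := by
  induction v with
  | nil => exact continuous_const
  | cons i v ih => simp only [lower]; fun_prop

@[fun_prop]
lemma continuous_height (v : List ℕ) : Continuous (height a b v) := by
  induction v with
  | nil => exact continuous_const
  | cons i v ih => simp only [height]; fun_prop

end Continuity

@[simp]
lemma digit_one : digit 1 = 0 := if_pos rfl

@[simp]
lemma digit_two : digit 2 = 1 := if_neg (by norm_num)

lemma digit_eq_zero_or_one (i : ℕ) : digit i = 0 ∨ digit i = 1 := by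
  unfold digit; split_ifs <;> simp

lemma digit_mem_Icc (i : ℕ) : digit i ∈ Icc (0 : ℝ) 1 := by
  rcases digit_eq_zero_or_one i with h | h <;> simp [h]

lemma invBranch_mem_Icc (i : ℕ) {x : ℝ} (hx : x ∈ Icc (0 : ℝ) 1) :
    invBranch i x ∈ Icc (0 : ℝ) 1 := by
  have := digit_mem_Icc i
  simp only [invBranch, mem_Icc] at *
  constructor <;> linarith

section Bounds

variable {a b x : ℝ}

lemma rate_le (hba : b ≤ a) (hx : x ∈ Icc (0 : ℝ) 1) : rate a b x ≤ a :=
  sub_le_self _ (mul_nonneg (sub_nonneg.2 hba) hx.1)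

lemma le_rate (hba : b ≤ a) (hx : x ∈ Icc (0 : ℝ) 1) : b ≤ rate a b x := by
  unfold rate; linarith [mul_le_of_le_one_right (sub_nonneg.2 hba) hx.2]

lemma rate_pos (hb : 0 < b) (hba : b ≤ a) (hx : x ∈ Icc (0 : ℝ) 1) : 0 < rate a b x :=
  hb.trans_le (le_rate hba hx)

lemma offset_nonneg (hba : b ≤ a) (ha : a ≤ 1) (i : ℕ) : 0 ≤ offset a b i :=
  mul_nonneg (mul_nonneg (sub_nonneg.2 ha) (sub_nonneg.2 hba)) (sub_nonneg.2 (digit_mem_Icc i).2)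

lemma offset_le (hba : b ≤ a) (ha : a ≤ 1) (i : ℕ) : offset a b i ≤ (1 - a) * (a - b) :=
  mul_le_of_le_one_right (mul_nonneg (sub_nonneg.2 ha) (sub_nonneg.2 hba))
    (sub_le_self _ (digit_mem_Icc i).1)

lemma height_pos (hb : 0 < b) (hba : b ≤ a) (v : List ℕ) (hx : x ∈ Icc (0 : ℝ) 1) :
    0 < height a b v x := by
  induction v generalizing x with
  | nil => exact one_pos
  | cons i v ih => exact mul_pos (rate_pos hb hba hx) (ih (invBranch_mem_Icc i hx))

lemma height_le_pow (hb : 0 < b) (hba : b ≤ a) (v : List ℕ) (hx : x ∈ Icc (0 : ℝ) 1) :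
    height a b v x ≤ a ^ v.length := by
  induction v generalizing x with
  | nil => simp [height]
  | cons i v ih =>
    have hi := invBranch_mem_Icc i hx
    rw [List.length_cons, pow_succ']
    exact mul_le_mul (rate_le hba hx) (ih hi) (height_pos hb hba v hi).le (hb.le.trans hba)

lemma lower_nonneg (hb : 0 ≤ b) (hba : b ≤ a) (ha : a ≤ 1) (v : List ℕ) (hx : x ∈ Icc (0 : ℝ) 1) :
    0 ≤ lower a b v x := by
  induction v generalizing x with
  | nil => exact le_rfl
  | cons i v ih =>
    exact add_nonneg (mul_nonneg (offset_nonneg hba ha i) hx.1)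
      (mul_nonneg (hb.trans (le_rate hba hx)) (ih (invBranch_mem_Icc i hx)))

lemma lower_le (hb : 0 ≤ b) (hba : b ≤ a) (ha : a ≤ 1) (v : List ℕ) (hx : x ∈ Icc (0 : ℝ) 1) :
    lower a b v x ≤ 1 - a := by
  induction v generalizing x with
  | nil => exact sub_nonneg.2 ha
  | cons i v ih =>
    calc lower a b (i :: v) x
        ≤ (1 - a) * (a - b) * x + rate a b x * (1 - a) :=
          add_le_add (mul_le_mul_of_nonneg_right (offset_le hba ha i) hx.1)
            (mul_le_mul_of_nonneg_left (ih (invBranch_mem_Icc i hx)) (hb.trans (le_rate hba hx)))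
      _ = a * (1 - a) := by unfold rate; ring
      _ ≤ 1 - a := mul_le_of_le_one_left (sub_nonneg.2 ha) ha

lemma lower_add_height_le (hb : 0 ≤ b) (hba : b ≤ a) (ha : a ≤ 1) (v : List ℕ)
    (hx : x ∈ Icc (0 : ℝ) 1) : lower a b v x + height a b v x ≤ 1 := by
  induction v generalizing x with
  | nil => simp [lower, height]
  | cons i v ih =>
    set y := invBranch i x with hy
    calc lower a b (i :: v) x + height a b (i :: v) x
        = offset a b i * x + rate a b x * (lower a b v y + height a b v y) := by
          simp only [lower, height, ← hy]; ring
      _ ≤ (1 - a) * (a - b) * x + rate a b x * 1 :=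
          add_le_add (mul_le_mul_of_nonneg_right (offset_le hba ha i) hx.1)
            (mul_le_mul_of_nonneg_left (ih (invBranch_mem_Icc i hx)) (hb.trans (le_rate hba hx)))
      _ = a - a * ((a - b) * x) := by unfold rate; ring
      _ ≤ 1 := (sub_le_self _ (mul_nonneg (hb.trans hba)
          (mul_nonneg (sub_nonneg.2 hba) hx.1))).trans ha

lemma exists_lower_height_append (v w : List ℕ) (hx : x ∈ Icc (0 : ℝ) 1) :
    ∃ y ∈ Icc (0 : ℝ) 1, height a b (v ++ w) x = height a b v x * height a b w y ∧
      lower a b (v ++ w) x = lower a b v x + height a b v x * lower a b w y := by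
  induction v generalizing x with
  | nil => exact ⟨x, hx, by simp [height], by simp [lower, height]⟩
  | cons i v ih =>
    obtain ⟨y, hy, hheight, hlower⟩ := ih (invBranch_mem_Icc i hx)
    refine ⟨y, hy, ?_, ?_⟩
    · simp only [List.cons_append, height, hheight]; ring
    · simp only [List.cons_append, height, lower, hlower]; ring

end Bounds

section Distortion

variable {a b x y : ℝ}

lemma rate_le_exp_mul_rate (hb : 0 < b) (hba : b ≤ a) (hxy : x ≤ y) (hy : y ∈ Icc (0 : ℝ) 1) :
    rate a b x ≤ Real.exp ((a - b) / b * (y - x)) * rate a b y := by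
  have hc : 0 ≤ (a - b) / b * (y - x) :=
    mul_nonneg (div_nonneg (sub_nonneg.2 hba) hb.le) (sub_nonneg.2 hxy)
  calc rate a b x = (a - b) / b * (y - x) * b + rate a b y := by unfold rate; field_simp; ring
    _ ≤ (a - b) / b * (y - x) * rate a b y + rate a b y := by
        grw [mul_le_mul_of_nonneg_left (le_rate hba hy) hc]
    _ = ((a - b) / b * (y - x) + 1) * rate a b y := by ring
    _ ≤ _ := mul_le_mul_of_nonneg_right (Real.add_one_le_exp _) (rate_pos hb hba hy).le

lemma height_le_exp_mul_height (hb : 0 < b) (hba : b ≤ a) (v : List ℕ) (hx : x ∈ Icc (0 : ℝ) 1)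
    (hy : y ∈ Icc (0 : ℝ) 1) (hxy : x ≤ y) :
    height a b v x ≤ Real.exp (2 * ((a - b) / b) * (y - x)) * height a b v y := by
  induction v generalizing x y with
  | nil =>
    simp only [height, mul_one, Real.one_le_exp_iff]
    exact mul_nonneg (mul_nonneg two_pos.le (div_nonneg (sub_nonneg.2 hba) hb.le))
      (sub_nonneg.2 hxy)
  | cons i v ih =>
    have hix := invBranch_mem_Icc i hx
    have hiy := invBranch_mem_Icc i hy
    have hixy : invBranch i x ≤ invBranch i y := by unfold invBranch; gcongr
    calc rate a b x * height a b v (invBranch i x)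
        ≤ _ := mul_le_mul (rate_le_exp_mul_rate hb hba hxy hy) (ih hix hiy hixy)
          (height_pos hb hba v hix).le (mul_nonneg (Real.exp_pos _).le (rate_pos hb hba hy).le)
      _ = _ := by
          rw [mul_mul_mul_comm, ← Real.exp_add, height]
          congr 2
          unfold invBranch
          ring

lemma height_antitone (hb : 0 < b) (hba : b ≤ a) (v : List ℕ) (hx : x ∈ Icc (0 : ℝ) 1)
    (hy : y ∈ Icc (0 : ℝ) 1) (hxy : x ≤ y) : height a b v y ≤ height a b v x := by
  induction v generalizing x y with
  | nil => exact le_rfl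
  | cons i v ih =>
    have hix := invBranch_mem_Icc i hx
    have hiy := invBranch_mem_Icc i hy
    exact mul_le_mul (sub_le_sub_left (mul_le_mul_of_nonneg_left hxy (sub_nonneg.2 hba)) a)
      (ih hix hiy (by unfold invBranch; gcongr)) (height_pos hb hba v hiy).le
      (rate_pos hb hba hx).le

/-- A bound, uniform over all words, for the ratio of two heights of the same strip. -/
def distortion (a b : ℝ) : ℝ := Real.exp (2 * ((a - b) / b))

lemma distortion_pos (a b : ℝ) : 0 < distortion a b := Real.exp_pos _

lemma height_zero_le_distortion_mul (hb : 0 < b) (hba : b ≤ a) (v : List ℕ)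
    (hx : x ∈ Icc (0 : ℝ) 1) : height a b v 0 ≤ distortion a b * height a b v x := by
  refine (height_le_exp_mul_height hb hba v unitInterval.zero_mem hx hx.1).trans
    (mul_le_mul_of_nonneg_right (Real.exp_le_exp.2 ?_) (height_pos hb hba v hx).le)
  rw [sub_zero]
  exact mul_le_of_le_one_right (mul_nonneg two_pos.le (div_nonneg (sub_nonneg.2 hba) hb.le)) hx.2

end Distortion

/-! ### Transversality of strips with different newest symbols -/

/-- The derivative of `lower`. -/
def lowerDeriv (a b : ℝ) : List ℕ → ℝ → ℝ
  | [], _ => 0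
  | i :: v, x => offset a b i - (a - b) * lower a b v (invBranch i x) +
      rate a b x * (lowerDeriv a b v (invBranch i x) / 2)

lemma hasDerivAt_rate (a b x : ℝ) : HasDerivAt (rate a b) (-(a - b)) x :=
  (((hasDerivAt_id x).const_mul (a - b)).const_sub a).congr_deriv (by ring)

lemma hasDerivAt_invBranch (i : ℕ) (x : ℝ) : HasDerivAt (invBranch i) (1 / 2) x :=
  ((hasDerivAt_id x).add_const (digit i)).div_const 2

lemma hasDerivAt_lower (a b : ℝ) (v : List ℕ) (x : ℝ) :
    HasDerivAt (lower a b v) (lowerDeriv a b v x) x := by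
  induction v generalizing x with
  | nil => exact hasDerivAt_const x 0
  | cons i v ih =>
    have hoffset := (hasDerivAt_id x).const_mul (offset a b i)
    have hbranch := (ih (invBranch i x)).comp x (hasDerivAt_invBranch i x)
    refine (hoffset.add ((hasDerivAt_rate a b x).mul hbranch)).congr_deriv ?_
    simp only [lowerDeriv, Function.comp]
    ring

/-- The derivative of `lower`, corrected by a multiple of `lower`. The multiple is chosen so that
`lower` enters the recursion `corrSlope_cons` only with a coefficient of order `(a - b) ^ 2`. -/
def corrSlope (a b : ℝ) (v : List ℕ) (x : ℝ) : ℝ :=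
  lowerDeriv a b v x + 2 * (a - b) / a * lower a b v x

lemma corrSlope_cons {a : ℝ} (b : ℝ) (ha : a ≠ 0) (i : ℕ) (v : List ℕ) (x : ℝ) :
    corrSlope a b (i :: v) x = offset a b i * (1 + 2 * (a - b) / a * x)
      - (a - b) ^ 2 * x / a * lower a b v (invBranch i x)
      + rate a b x * corrSlope a b v (invBranch i x) / 2 := by
  simp only [corrSlope, lowerDeriv, lower, rate]
  field_simp
  ring

section CorrSlope

variable {a b p q x : ℝ}

lemma corrSlope_le (hb : 0 < b) (hba : b ≤ a) (ha : a ≤ 1) (hp : 0 ≤ p) (hq : 0 ≤ q)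
    (h₁ : 1 + a * p / 2 ≤ p) (h₂ : 2 * (a - b) / a + a * q / 4 - (a - b) * p / 2 ≤ q)
    (h₃ : a * q / 4 ≤ 1) (v : List ℕ) (hx : x ∈ Icc (0 : ℝ) 1) :
    corrSlope a b v x ≤ (1 - a) * (a - b) * (p + q * x) := by
  have ha0 : 0 < a := hb.trans_le hba
  have hγ : 0 ≤ (1 - a) * (a - b) := mul_nonneg (sub_nonneg.2 ha) (sub_nonneg.2 hba)
  induction v generalizing x with
  | nil =>
    simp only [corrSlope, lowerDeriv, lower, mul_zero, add_zero]
    exact mul_nonneg hγ (add_nonneg hp (mul_nonneg hq hx.1))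
  | cons i v ih =>
    have hy := invBranch_mem_Icc i hx
    have hlower : 0 ≤ (a - b) ^ 2 * x / a * lower a b v (invBranch i x) :=
      mul_nonneg (div_nonneg (mul_nonneg (sq_nonneg _) hx.1) ha0.le)
        (lower_nonneg hb.le hba ha v hy)
    have hslope := mul_le_mul_of_nonneg_left (ih hy) (rate_pos hb hba hx).le
    have hbracket : (1 - digit i) * (1 + 2 * (a - b) / a * x) +
        rate a b x * (p + q * invBranch i x) / 2 ≤ p + q * x := by
      have hβx : 0 ≤ (a - b) * x := mul_nonneg (sub_nonneg.2 hba) hx.1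
      have hqx : 0 ≤ q * x := mul_nonneg hq hx.1
      unfold rate invBranch
      rcases digit_eq_zero_or_one i with hi | hi <;> rw [hi]
      · linarith [mul_le_mul_of_nonneg_right h₂ hx.1, mul_nonneg hβx hqx]
      · linarith [mul_nonneg hβx hqx, mul_nonneg hβx hp, mul_nonneg hβx hq,
          mul_nonneg (sub_nonneg.2 ha) hqx]
    rw [corrSlope_cons b ha0.ne', offset]
    linarith [mul_le_mul_of_nonneg_left hbracket hγ]

lemma le_corrSlope (hb : 0 < b) (hba : b ≤ a) (ha : a ≤ 1) (hp : 0 ≤ p) (hq : 0 ≤ q)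
    (h₁ : a / 2 * (p + q / 2) ≤ p) (h₂ : (a - b) / a + a * q / 4 ≤ q) (v : List ℕ)
    (hx : x ∈ Icc (0 : ℝ) 1) :
    -((1 - a) * (a - b) * (p + q * x)) ≤ corrSlope a b v x := by
  have ha0 : 0 < a := hb.trans_le hba
  have hβ : 0 ≤ a - b := sub_nonneg.2 hba
  have hγ : 0 ≤ (1 - a) * (a - b) := mul_nonneg (sub_nonneg.2 ha) hβ
  induction v generalizing x with
  | nil =>
    simp only [corrSlope, lowerDeriv, lower, mul_zero, add_zero]
    exact neg_nonpos.2 (mul_nonneg hγ (add_nonneg hp (mul_nonneg hq hx.1)))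
  | cons i v ih =>
    have hx0 := hx.1
    have hy := invBranch_mem_Icc i hx
    have hoffset : 0 ≤ offset a b i * (1 + 2 * (a - b) / a * x) :=
      mul_nonneg (offset_nonneg hba ha i) (by positivity)
    have hlower : (a - b) ^ 2 * x / a * lower a b v (invBranch i x) ≤
        (a - b) ^ 2 * x / a * (1 - a) :=
      mul_le_mul_of_nonneg_left (lower_le hb.le hba ha v hy) (by positivity)
    have hslope := mul_le_mul_of_nonneg_left (ih hy) (rate_pos hb hba hx).le
    have hbracket : (a - b) / a * x + rate a b x * (p + q * invBranch i x) / 2 ≤ p + q * x := by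
      have hpre : p + q * invBranch i x ≤ p + q * ((x + 1) / 2) := by
        unfold invBranch; gcongr; exact (digit_mem_Icc i).2
      have := mul_le_mul (rate_le hba hx) hpre (add_nonneg hp (mul_nonneg hq hy.1)) ha0.le
      linarith [mul_le_mul_of_nonneg_right h₂ hx0]
    rw [corrSlope_cons b ha0.ne']
    have := mul_le_mul_of_nonneg_left hbracket hγ
    have : (a - b) ^ 2 * x / a * (1 - a) = (1 - a) * (a - b) * ((a - b) / a * x) := by ring
    linarith

end CorrSlope

/-- The difference of the lower boundaries of the strips of `1 :: v` and `2 :: w`, multiplied by a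
positive factor that makes it monotone where `slopeBound` is positive. -/
def normalizedGap (a b : ℝ) (v w : List ℕ) (u : ℝ) : ℝ :=
  Real.exp ((a - b) / a * u) *
    ((1 - a) * (a - b) * u / rate a b u + lower a b v (invBranch 1 u) - lower a b w (invBranch 2 u))

/-- The derivative of `normalizedGap`, up to the factor `exp ((a - b) / a * u)`. -/
def gapSlope (a b : ℝ) (v w : List ℕ) (u : ℝ) : ℝ :=
  (1 - a) * (a - b) * (a / rate a b u ^ 2 + (a - b) / a * u / rate a b u) +
    (corrSlope a b v (invBranch 1 u) - corrSlope a b w (invBranch 2 u)) / 2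

/-- A lower bound for `gapSlope`, uniform over all words and up to a positive constant factor. -/
def slopeBound (a b u : ℝ) : ℝ :=
  (1 - a) * (4 - a) + 3 / 2 * ((a - b) * u) * (a * (2 - a) * (4 - a))
    - (a - b) * (2 - a) - (a - b) * u * (3 - 2 * a)

section Gap

variable {a b u : ℝ}

lemma normalizedGap_eq (v w : List ℕ) (hu : rate a b u ≠ 0) :
    normalizedGap a b v w u = Real.exp ((a - b) / a * u) / rate a b u *
      (lower a b (1 :: v) u - lower a b (2 :: w) u) := by
  simp only [normalizedGap, lower, offset, digit_one, digit_two]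
  field_simp
  ring

lemma hasDerivAt_normalizedGap (v w : List ℕ) (hu : rate a b u ≠ 0) :
    HasDerivAt (normalizedGap a b v w) (Real.exp ((a - b) / a * u) * gapSlope a b v w u) u := by
  have hexp := ((hasDerivAt_id u).const_mul ((a - b) / a)).exp
  have hquot := ((hasDerivAt_id u).const_mul ((1 - a) * (a - b))).div (hasDerivAt_rate a b u) hu
  have hv := (hasDerivAt_lower a b v (invBranch 1 u)).comp u (hasDerivAt_invBranch 1 u)
  have hw := (hasDerivAt_lower a b w (invBranch 2 u)).comp u (hasDerivAt_invBranch 2 u)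
  refine (hexp.mul ((hquot.add hv).sub hw)).congr_deriv ?_
  have hnum : (1 - a) * (a - b) * 1 * rate a b u - (1 - a) * (a - b) * u * -(a - b) =
      (1 - a) * (a - b) * a := by unfold rate; ring
  simp only [id, Pi.add_apply, Pi.sub_apply, Pi.div_apply, Function.comp, gapSlope, corrSlope,
    hnum]
  ring

lemma inv_add_le_rate_terms (hb : 0 < b) (hba : b ≤ a) (ha : a ≤ 1) (hu : u ∈ Icc (0 : ℝ) 1) :
    1 / a + 3 * ((a - b) * u) ≤ a / rate a b u ^ 2 + (a - b) / a * u / rate a b u := by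
  have ha0 : 0 < a := hb.trans_le hba
  have hr := rate_pos hb hba hu
  have hra := rate_le hba hu
  have hsub : (a - b) * u = a - rate a b u := by unfold rate; ring
  have hthree : 3 ≤ (a + 2 * rate a b u) / (a * rate a b u ^ 2) := by
    have har : a * rate a b u ≤ 1 := mul_le_one₀ ha hr.le (hra.trans ha)
    rw [le_div_iff₀ (by positivity)]
    linarith [mul_le_mul_of_nonneg_right har hr.le]
  calc 1 / a + 3 * ((a - b) * u)
      ≤ 1 / a + (a + 2 * rate a b u) / (a * rate a b u ^ 2) * ((a - b) * u) := by
        gcongr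
        exact mul_nonneg (sub_nonneg.2 hba) hu.1
    _ = a / rate a b u ^ 2 + (a - b) * u / (a * rate a b u) := by
        rw [hsub]; field_simp; ring
    _ = _ := by rw [div_mul_eq_mul_div, div_div]

lemma slopeBound_le_gapSlope (hb : 0 < b) (hba : b ≤ a) (ha : a ≤ 1) (v w : List ℕ)
    (hu : u ∈ Icc (0 : ℝ) 1) :
    (1 - a) * (a - b) * (2 * slopeBound a b u / (a * (2 - a) * (4 - a))) ≤
      gapSlope a b v w u := by
  have ha0 : 0 < a := hb.trans_le hba
  have h2a : 0 < 2 - a := by linarith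
  have h4a : 0 < 4 - a := by linarith
  have h43 : 0 ≤ 4 - 3 * a := by linarith
  have hβ : 0 ≤ a - b := sub_nonneg.2 hba
  have hγ : 0 ≤ (1 - a) * (a - b) := mul_nonneg (sub_nonneg.2 ha) hβ
  -- The values of `p` and `q` turn the inequalities `h₁` and `h₂` of `corrSlope_le` and
  -- `le_corrSlope` into equalities.
  have hw := corrSlope_le (p := 2 / (2 - a))
    (q := 4 * (a - b) * (4 - 3 * a) / (a * (2 - a) * (4 - a))) hb hba ha
    (by positivity) (by positivity) (by field_simp; linarith) (by field_simp; linarith)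
    (by
      have : (a - b) * (4 - 3 * a) ≤ (2 - a) * (4 - a) :=
        mul_le_mul (by linarith) (by linarith) h43 h2a.le
      rw [← mul_div_assoc, div_div, div_le_one (by positivity)]
      linarith [mul_le_mul_of_nonneg_left this ha0.le]) w (invBranch_mem_Icc 2 hu)
  have hv := le_corrSlope (p := 2 * (a - b) / ((4 - a) * (2 - a)))
    (q := 4 * (a - b) / (a * (4 - a))) hb hba ha (by positivity) (by positivity)
    (by field_simp; linarith) (by field_simp; linarith) v (invBranch_mem_Icc 1 hu)
  have hid : 2 * slopeBound a b u / (a * (2 - a) * (4 - a)) = 1 / a + 3 * ((a - b) * u)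
      - (2 * (a - b) / ((4 - a) * (2 - a)) + 4 * (a - b) / (a * (4 - a)) * invBranch 1 u) / 2
      - (2 / (2 - a) +
          4 * (a - b) * (4 - 3 * a) / (a * (2 - a) * (4 - a)) * invBranch 2 u) / 2 := by
    simp only [slopeBound, invBranch, digit_one, digit_two]
    field_simp
    ring
  have hmain := mul_le_mul_of_nonneg_left (inv_add_le_rate_terms hb hba ha hu) hγ
  rw [hid, gapSlope]
  linarith

lemma abs_normalizedGap_le (hb : 0 < b) (hba : b ≤ a) (v w : List ℕ) (hu : u ∈ Icc (0 : ℝ) 1) :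
    |normalizedGap a b v w u| ≤
      Real.exp ((a - b) / a) / b * |lower a b (1 :: v) u - lower a b (2 :: w) u| := by
  have hr := rate_pos hb hba hu
  rw [normalizedGap_eq v w hr.ne', abs_mul, abs_of_pos (div_pos (Real.exp_pos _) hr)]
  gcongr
  · exact mul_le_of_le_one_right (div_nonneg (sub_nonneg.2 hba) (hb.le.trans hba)) hu.2
  · exact le_rate hba hu

lemma exists_volume_lower_sub_le {u₀ d : ℝ} (hb : 0 < b) (hba : b < a) (ha : a < 1) (hd : 0 < d)
    (hslope : ∀ u ∈ Icc (0 : ℝ) 1, u₀ < u → d ≤ slopeBound a b u) :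
    ∃ c : ℝ, ∀ (v w : List ℕ) (m : ℝ),
      volume {u ∈ Icc (0 : ℝ) 1 ∩ Ioi u₀ | |lower a b (1 :: v) u - lower a b (2 :: w) u| ≤ m}
        ≤ ENNReal.ofReal (c * m) := by
  set k : ℝ := (1 - a) * (a - b) * (2 * d / (a * (2 - a) * (4 - a))) with hk
  set E : ℝ := Real.exp ((a - b) / a) / b
  have hγ : 0 < (1 - a) * (a - b) := mul_pos (sub_pos.2 ha) (sub_pos.2 hba)
  have hden : 0 < a * (2 - a) * (4 - a) :=
    mul_pos (mul_pos (hb.trans hba) (by linarith)) (by linarith)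
  have hk0 : 0 < k := mul_pos hγ (by positivity)
  refine ⟨2 * E / k, fun v w m => ?_⟩
  have hderivAt (u : ℝ) (hu : u ∈ Icc (0 : ℝ) 1 ∩ Ioi u₀) :=
    hasDerivAt_normalizedGap v w (rate_pos hb hba.le hu.1).ne'
  have hle (u : ℝ) (hu : u ∈ Icc (0 : ℝ) 1 ∩ Ioi u₀) : k ≤ deriv (normalizedGap a b v w) u := by
    have hgap : k ≤ gapSlope a b v w u := by
      refine le_trans ?_ (slopeBound_le_gapSlope hb hba.le ha.le v w hu.1)
      rw [hk]
      gcongr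
      exact hslope u hu.1 hu.2
    rw [(hderivAt u hu).deriv]
    refine hgap.trans (le_mul_of_one_le_left (hk0.le.trans hgap) (Real.one_le_exp ?_))
    exact mul_nonneg (div_nonneg (sub_nonneg.2 hba.le) (hb.trans hba).le) hu.1.1
  calc volume {u ∈ Icc (0 : ℝ) 1 ∩ Ioi u₀ | |lower a b (1 :: v) u - lower a b (2 :: w) u| ≤ m}
      ≤ volume {u ∈ Icc (0 : ℝ) 1 ∩ Ioi u₀ | |normalizedGap a b v w u| ≤ E * m} :=
        measure_mono fun u ⟨hu, hclose⟩ => ⟨hu, (abs_normalizedGap_le hb hba.le v w hu.1).trans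
          (mul_le_mul_of_nonneg_left hclose (by positivity))⟩
    _ ≤ ENNReal.ofReal (2 * (E * m) / k) :=
        volume_abs_le_le_of_le_deriv ((convex_Icc _ _).inter (convex_Ioi _)) hk0
          (fun u hu => (hderivAt u hu).continuousAt.continuousWithinAt)
          (fun u hu => (hderivAt u (interior_subset hu)).differentiableAt.differentiableWithinAt)
          (fun u hu => hle u (interior_subset hu))
    _ = ENNReal.ofReal (2 * E / k * m) := by congr 1; ring

end Gap

/-! ### Weights for the energy recursion -/

/-- The parameters of the weighted energy estimate: below `u₀` the two branches are compared by
Young's inequality with weight ratio `R`, above `u₀` they are transversal with `slopeBound ≥ d`;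
the fields make the weighted energy contract by the factor `κ`. -/
structure EnergyWeights (a b u₀ R κ d : ℝ) : Prop where
  lt_half : u₀ < 1 / 2
  one_le : 1 ≤ R
  pos : 0 < κ
  lt_one : κ < 1
  slope_pos : 0 < d
  one_add_inv_le : ∀ u ∈ Icc (0 : ℝ) 1, u ≤ u₀ → 1 + R⁻¹ ≤ 2 * κ * rate a b u
  ratio_le : ∀ u ∈ Icc (0 : ℝ) 1, u / 2 ≤ u₀ → R ≤ 2 * κ * rate a b u
  one_le_rate : ∀ u ∈ Icc (0 : ℝ) 1, 1 ≤ 2 * κ * rate a b u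
  le_slope : ∀ u ∈ Icc (0 : ℝ) 1, u₀ < u → d ≤ slopeBound a b u

section EnergyWeights

variable {a b : ℝ}

lemma rate_antitone (hba : b ≤ a) : Antitone (rate a b) := fun x y hxy => by
  unfold rate
  gcongr

lemma eventually_le_mul_of_lt {x y : ℝ} (hxy : x < y) : ∀ᶠ κ in 𝓝[<] (1 : ℝ), x ≤ κ * y :=
  nhdsWithin_le_nhds <| ((continuous_mul_const y).tendsto' 1 y (one_mul y)).eventually_const_le hxy

lemma exists_energyWeights_of_le_slopeBound {u₀ R d : ℝ} (hb : 1 / 2 < b) (hba : b ≤ a)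
    (hu₀ : u₀ < 1 / 2) (hR : 1 ≤ R) (hd : 0 < d)
    (hslope : ∀ u ∈ Icc (0 : ℝ) 1, u₀ < u → d ≤ slopeBound a b u)
    (hyoung : 1 + R⁻¹ < 2 * rate a b u₀) (hratio : R < 2 * rate a b (2 * u₀)) :
    ∃ κ, EnergyWeights a b u₀ R κ d := by
  have hpos : ∀ᶠ κ in 𝓝[<] (1 : ℝ), 0 < κ := nhdsWithin_le_nhds (lt_mem_nhds one_pos)
  obtain ⟨κ, hκyoung, hκratio, hκone, hκpos, hκlt⟩ := ((eventually_le_mul_of_lt hyoung).and <|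
    (eventually_le_mul_of_lt hratio).and <|
    (eventually_le_mul_of_lt (show 1 < 2 * b by linarith)).and <|
    hpos.and eventually_mem_nhdsWithin).exists
  have hmono {u v : ℝ} (huv : u ≤ v) : κ * (2 * rate a b v) ≤ 2 * κ * rate a b u := by
    linarith [mul_le_mul_of_nonneg_left (rate_antitone hba huv) hκpos.le]
  refine ⟨κ, hu₀, hR, hκpos, hκlt, hd, fun u _ hu => hκyoung.trans (hmono hu),
    fun u _ hu => hκratio.trans (hmono (by linarith)), fun u hu => hκone.trans ?_, hslope⟩
  linarith [mul_le_mul_of_nonneg_left (le_rate hba hu) hκpos.le]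

lemma slopeBound_eq (e t u : ℝ) : slopeBound (1 - e) (1 - e - t) u = e * (3 + e)
    + t * u * (3 / 2 * ((1 - e) * (1 + e) * (3 + e)) - (1 + 2 * e)) - t * (1 + e) := by
  rw [slopeBound]
  ring

lemma slopeBound_coeff_nonneg {e : ℝ} (he0 : 0 ≤ e) (he : e ≤ 1 / 2) :
    0 ≤ 3 / 2 * ((1 - e) * (1 + e) * (3 + e)) - (1 + 2 * e) := by
  have h : 3 / 4 ≤ (1 - e) * (1 + e) := by nlinarith
  nlinarith

lemma le_slopeBound_of_le {e t u : ℝ} (he : 0.14 ≤ e) (ht : 0 < t) (hte : t < 1 / 2 - e)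
    (hu : 0 ≤ u) : 0.029 ≤ slopeBound (1 - e) (1 - e - t) u := by
  have h := mul_nonneg (mul_nonneg ht.le hu)
    (slopeBound_coeff_nonneg (by linarith : 0 ≤ e) (by linarith))
  rw [slopeBound_eq]
  nlinarith

lemma le_slopeBound_of_lt {e t u : ℝ} (he0 : 0 < e) (he : e < 0.14) (ht : 0 < t)
    (hte : t < 1 / 2 - e) (hu : 0.29 - 1.5 * e < u) :
    0.003 * t ≤ slopeBound (1 - e) (1 - e - t) u := by
  have hcoeff : 3.5 - 2 * e ≤ 3 / 2 * ((1 - e) * (1 + e) * (3 + e)) - (1 + 2 * e) := by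
    have : 0 ≤ e * (1 - 3 * e - e ^ 2) := mul_nonneg he0.le (by nlinarith)
    linarith
  have hmid : t * (0.29 - 1.5 * e) * (3.5 - 2 * e) ≤
      t * u * (3 / 2 * ((1 - e) * (1 + e) * (3 + e)) - (1 + 2 * e)) :=
    mul_le_mul (by gcongr) hcoeff (by linarith) (mul_nonneg ht.le (by linarith))
  have hsmall : t * (6 * e + 12 * e ^ 2) ≤ 3 * e := by
    have := mul_le_mul_of_nonneg_right hte.le (by positivity : 0 ≤ 6 * e + 12 * e ^ 2)
    linarith [pow_pos he0 3]
  have hquad : 0.003 ≤ 6 * e + 12 * e ^ 2 + (0.29 - 1.5 * e) * (3.5 - 2 * e) - (1 + e) := by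
    linarith [sq_nonneg (e - 0.0277)]
  rw [slopeBound_eq]
  linarith [mul_le_mul_of_nonneg_left hquad ht.le, sq_nonneg e]

lemma exists_weight_ratio {e t : ℝ} (he0 : 0 < e) (he : e < 0.14) (ht : 0 < t)
    (hte : t < 1 / 2 - e) :
    ∃ R, 1 ≤ R ∧ 1 + R⁻¹ < 2 * rate (1 - e) (1 - e - t) (0.29 - 1.5 * e) ∧
      R < 2 * rate (1 - e) (1 - e - t) (2 * (0.29 - 1.5 * e)) := by
  obtain ⟨z, hz⟩ : ∃ z, z = t * (0.29 - 1.5 * e) := ⟨_, rfl⟩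
  have hz0 : 0 < z := hz ▸ mul_pos ht (by linarith)
  have hz_le : z ≤ 0.145 - 1.04 * e + 1.5 * e ^ 2 := by
    have := mul_le_mul_of_nonneg_right hte.le (by linarith : 0 ≤ 0.29 - 1.5 * e)
    linarith
  have he_sq : 0 ≤ e * (0.14 - e) := mul_nonneg he0.le (by linarith)
  have hrate : rate (1 - e) (1 - e - t) (0.29 - 1.5 * e) = 1 - e - z := by rw [rate, hz]; ring
  have hrate' : rate (1 - e) (1 - e - t) (2 * (0.29 - 1.5 * e)) = 1 - e - 2 * z := by
    rw [rate, hz]; ring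
  have hpos : 0 < 2 * (1 - e - z) - 1 := by linarith
  have hprod : 1 < 2 * (1 - e - 2 * z) * (2 * (1 - e - z) - 1) := by
    have := mul_le_mul (by linarith : 2 * (0.71 + 0.66 * e) ≤ 2 * (1 - e - 2 * z))
      (by linarith : 0.71 - 0.34 * e ≤ 2 * (1 - e - z) - 1) (by linarith) (by linarith)
    linarith
  obtain ⟨R, hR, hR'⟩ := exists_between ((inv_lt_iff_one_lt_mul₀ hpos).2 hprod)
  have hR1 : 1 < R := ((one_lt_inv₀ hpos).2 (by linarith)).trans hR
  refine ⟨R, hR1.le, ?_, hrate' ▸ hR'⟩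
  rw [hrate]
  linarith [inv_lt_of_inv_lt₀ hpos hR]

lemma exists_energyWeights (hb : 1 / 2 < b) (hba : b < a) (ha : a < 1) :
    ∃ u₀ R κ d, EnergyWeights a b u₀ R κ d := by
  obtain ⟨e, rfl⟩ : ∃ e, a = 1 - e := ⟨1 - a, by ring⟩
  obtain ⟨t, rfl⟩ : ∃ t, b = 1 - e - t := ⟨1 - e - b, by ring⟩
  have he0 : 0 < e := by linarith
  have ht : 0 < t := by linarith
  have hte : t < 1 / 2 - e := by linarith
  obtain he | he := le_or_gt 0.14 e
  · -- The strips are transversal everywhere: take `u₀` so negative that its conditions are void.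
    have hrate : rate (1 - e) (1 - e - t) (-t⁻¹) = 2 - e := by rw [rate]; field_simp; ring
    have hrate' : rate (1 - e) (1 - e - t) (2 * -t⁻¹) = 3 - e := by rw [rate]; field_simp; ring
    have hu₀ : -t⁻¹ < 1 / 2 := by linarith [inv_pos.2 ht]
    exact ⟨-t⁻¹, 1, _, 0.029, (exists_energyWeights_of_le_slopeBound hb hba.le hu₀ le_rfl
      (by norm_num) (fun u hu _ => le_slopeBound_of_le he ht hte hu.1)
      (by linarith) (by linarith)).choose_spec⟩
  · -- The threshold must be large for `le_slopeBound_of_lt` and small for `exists_weight_ratio`;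
    -- the linear function `0.29 - 1.5 * e` was found numerically to satisfy both.
    obtain ⟨R, hR, hyoung, hratio⟩ := exists_weight_ratio he0 he ht hte
    exact ⟨0.29 - 1.5 * e, R, _, 0.003 * t, (exists_energyWeights_of_le_slopeBound hb hba.le
      (by linarith) hR (by positivity) (fun u _ hu => le_slopeBound_of_lt he0 he ht hte hu)
      hyoung hratio).choose_spec⟩

end EnergyWeights

/-! ### Densities of strips -/

/-- The words of length `n` over the alphabet `{1, 2}`. -/
def words : ℕ → Finset (List ℕ)
  | 0 => {[]}
  | n + 1 => (words n).image (List.cons 1) ∪ (words n).image (List.cons 2)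

lemma sum_words_succ {M : Type*} [AddCommMonoid M] (n : ℕ) (φ : List ℕ → M) :
    ∑ v ∈ words (n + 1), φ v = ∑ v ∈ words n, φ (1 :: v) + ∑ v ∈ words n, φ (2 :: v) := by
  have hdisj : Disjoint ((words n).image (List.cons 1)) ((words n).image (List.cons 2)) := by
    simp only [Finset.disjoint_left, Finset.mem_image]
    rintro _ ⟨v, -, rfl⟩ ⟨w, -, h⟩
    simp at h
  rw [words, Finset.sum_union hdisj, Finset.sum_image List.cons_injective.injOn,
    Finset.sum_image List.cons_injective.injOn]

lemma card_words (n : ℕ) : (words n).card = 2 ^ n := by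
  induction n with
  | zero => rfl
  | succ n ih => rw [Finset.card_eq_sum_ones, sum_words_succ, ← Finset.card_eq_sum_ones, ih]; ring

/-- The vertical slice over `x` of the strip of the word `v`. -/
def slice (a b : ℝ) (v : List ℕ) (x : ℝ) : Set ℝ :=
  Icc (lower a b v x) (lower a b v x + height a b v x)

/-- The density of the normalised Lebesgue measure on `slice a b v x`. -/
def stripDensity (a b : ℝ) (v : List ℕ) (x z : ℝ) : ℝ≥0∞ :=
  (ENNReal.ofReal (height a b v x))⁻¹ * (slice a b v x).indicator 1 z

/-- The average of `stripDensity` over the words of length `n`. -/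
def density (a b : ℝ) (n : ℕ) (x z : ℝ) : ℝ≥0∞ :=
  2⁻¹ ^ n * ∑ v ∈ words n, stripDensity a b v x z

/-- The contribution to `density a b (n + 1)` of the words with newest symbol `i`. -/
def branchDensity (a b : ℝ) (n i : ℕ) (x z : ℝ) : ℝ≥0∞ :=
  2⁻¹ ^ (n + 1) * ∑ v ∈ words n, stripDensity a b (i :: v) x z

section Density

variable {a b x : ℝ}

lemma density_succ (n : ℕ) (x z : ℝ) :
    density a b (n + 1) x z = branchDensity a b n 1 x z + branchDensity a b n 2 x z := by
  rw [density, sum_words_succ, mul_add, branchDensity, branchDensity]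

section Measurability

variable {α : Type*} [MeasurableSpace α] {f g : α → ℝ}

@[fun_prop]
lemma measurable_stripDensity (v : List ℕ) (hf : Measurable f) (hg : Measurable g) :
    Measurable fun p => stripDensity a b v (f p) (g p) := by
  have hslice : MeasurableSet {p | g p ∈ slice a b v (f p)} :=
    (measurableSet_le (by fun_prop) hg).inter (measurableSet_le hg (by fun_prop))
  exact (by fun_prop : Measurable fun p => (ENNReal.ofReal (height a b v (f p)))⁻¹).mul
    ((measurable_const (a := (1 : ℝ≥0∞))).indicator hslice)

@[fun_prop]
lemma measurable_density (n : ℕ) (hf : Measurable f) (hg : Measurable g) :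
    Measurable fun p => density a b n (f p) (g p) := by
  unfold density
  fun_prop

@[fun_prop]
lemma measurable_branchDensity (n i : ℕ) (hf : Measurable f) (hg : Measurable g) :
    Measurable fun p => branchDensity a b n i (f p) (g p) := by
  unfold branchDensity
  fun_prop

end Measurability

lemma stripDensity_le_inv_height (v : List ℕ) (x z : ℝ) :
    stripDensity a b v x z ≤ (ENNReal.ofReal (height a b v x))⁻¹ :=
  mul_le_of_le_one_right' (indicator_le_self' (fun _ _ => zero_le) z)

lemma lintegral_stripDensity (hb : 0 < b) (hba : b ≤ a) (v : List ℕ) (hx : x ∈ Icc (0 : ℝ) 1) :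
    ∫⁻ z, stripDensity a b v x z = 1 := by
  unfold stripDensity slice
  rw [lintegral_const_mul _ (measurable_one.indicator measurableSet_Icc),
    lintegral_indicator_one measurableSet_Icc, Real.volume_Icc, add_sub_cancel_left,
    ENNReal.inv_mul_cancel (ENNReal.ofReal_pos.2 (height_pos hb hba v hx)).ne' (by finiteness)]

lemma mem_slice_cons (hr : 0 < rate a b x) (i : ℕ) (v : List ℕ) (z : ℝ) :
    rate a b x * z + offset a b i * x ∈ slice a b (i :: v) x ↔ z ∈ slice a b v (invBranch i x) := by
  rw [slice, slice, lower, height, mem_Icc, mem_Icc, add_assoc, ← mul_add,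
    add_comm _ (offset a b i * x), add_le_add_iff_left, add_le_add_iff_left,
    mul_le_mul_iff_right₀ hr, mul_le_mul_iff_right₀ hr]

lemma stripDensity_cons (hr : 0 < rate a b x) (i : ℕ) (v : List ℕ) (z : ℝ) :
    stripDensity a b (i :: v) x (rate a b x * z + offset a b i * x) =
      (ENNReal.ofReal (rate a b x))⁻¹ * stripDensity a b v (invBranch i x) z := by
  have hmem := mem_slice_cons hr i v z
  rw [stripDensity, stripDensity, height, ENNReal.ofReal_mul hr.le,
    ENNReal.mul_inv (.inl (ENNReal.ofReal_pos.2 hr).ne') (.inl ENNReal.ofReal_ne_top), mul_assoc]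
  congr 2
  by_cases hz : z ∈ slice a b v (invBranch i x)
  · rw [indicator_of_mem hz, indicator_of_mem (hmem.2 hz)]; rfl
  · rw [indicator_of_notMem hz, indicator_of_notMem (mt hmem.1 hz)]

lemma branchDensity_rate_mul_add (hr : 0 < rate a b x) (n i : ℕ) (z : ℝ) :
    branchDensity a b n i x (rate a b x * z + offset a b i * x) =
      ENNReal.ofReal (2 * rate a b x)⁻¹ * density a b n (invBranch i x) z := by
  simp_rw [branchDensity, density, stripDensity_cons hr, ← Finset.mul_sum]
  rw [ENNReal.ofReal_inv_of_pos (by positivity), ENNReal.ofReal_mul zero_le_two,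
    ENNReal.ofReal_ofNat, ENNReal.mul_inv (.inl two_ne_zero) (.inl ENNReal.ofNat_ne_top)]
  ring

end Density

/-! ### The energy recursion -/

/-- The squared `L²`-norm of `density a b n x`. -/
def energy (a b : ℝ) (n : ℕ) (x : ℝ) : ℝ≥0∞ := ∫⁻ z, density a b n x z ^ 2

/-- The interaction of the two branches in `energy a b (n + 1) x`. -/
def crossEnergy (a b : ℝ) (n : ℕ) (x : ℝ) : ℝ≥0∞ :=
  ∫⁻ z, branchDensity a b n 1 x z * branchDensity a b n 2 x z

section Energy

variable {a b x : ℝ}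

@[fun_prop]
lemma measurable_energy (n : ℕ) : Measurable (energy a b n) :=
  Measurable.lintegral_prod_right (f := fun x z => density a b n x z ^ 2) (by fun_prop)

@[fun_prop]
lemma measurable_crossEnergy (n : ℕ) : Measurable (crossEnergy a b n) :=
  Measurable.lintegral_prod_right
    (f := fun x z => branchDensity a b n 1 x z * branchDensity a b n 2 x z) (by fun_prop)

lemma energy_zero (x : ℝ) : energy a b 0 x = 1 := by
  have hsq (z : ℝ) : density a b 0 x z ^ 2 = (Icc (0 : ℝ) 1).indicator 1 z := by
    have : density a b 0 x z = (Icc (0 : ℝ) 1).indicator 1 z := by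
      simp [density, words, stripDensity, slice, lower, height]
    rw [this, indicator]
    split_ifs <;> simp
  rw [energy, lintegral_congr hsq, lintegral_indicator_one measurableSet_Icc]
  simp

lemma lintegral_branchDensity_sq (hr : 0 < rate a b x) (n i : ℕ) :
    ∫⁻ z, branchDensity a b n i x z ^ 2 =
      ENNReal.ofReal (4 * rate a b x)⁻¹ * energy a b n (invBranch i x) := by
  have himage : (fun z => rate a b x * z + offset a b i * x) '' univ = univ := by
    rw [image_univ]
    exact Function.Surjective.range_eq fun y =>
      ⟨(y - offset a b i * x) / rate a b x, by field_simp; ring⟩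
  have hchange := lintegral_image_mul_add hr (offset a b i * x)
    (fun z => branchDensity a b n i x z ^ 2) MeasurableSet.univ
  simp only [himage, setLIntegral_univ, branchDensity_rate_mul_add hr, mul_pow] at hchange
  rw [hchange, energy, lintegral_const_mul _ (by fun_prop), ← mul_assoc,
    ← ENNReal.ofReal_pow (by positivity), ← ENNReal.ofReal_mul hr.le]
  congr 2
  field_simp
  norm_num

lemma energy_succ (n : ℕ) (x : ℝ) :
    energy a b (n + 1) x = (∫⁻ z, branchDensity a b n 1 x z ^ 2) + 2 * crossEnergy a b n x
      + ∫⁻ z, branchDensity a b n 2 x z ^ 2 := by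
  rw [crossEnergy, ← lintegral_const_mul _ (by fun_prop), ← lintegral_add_left (by fun_prop),
    ← lintegral_add_left (by fun_prop)]
  exact lintegral_congr fun z => by rw [density_succ]; ring

lemma two_mul_crossEnergy_le {R S : ℝ≥0∞} (hRS : R * S = 1) (n : ℕ) (x : ℝ) :
    2 * crossEnergy a b n x ≤
      S * (∫⁻ z, branchDensity a b n 1 x z ^ 2) + R * ∫⁻ z, branchDensity a b n 2 x z ^ 2 := by
  rw [crossEnergy, ← lintegral_const_mul _ (by fun_prop), ← lintegral_const_mul _ (by fun_prop),
    ← lintegral_const_mul _ (by fun_prop), ← lintegral_add_left (by fun_prop)]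
  exact lintegral_mono fun z => two_mul_mul_le_of_mul_eq_one hRS _ _

lemma lintegral_stripDensity_mul_le (hb : 0 < b) (hba : b ≤ a) (v w : List ℕ)
    (hx : x ∈ Icc (0 : ℝ) 1) :
    ∫⁻ z, stripDensity a b v x z * stripDensity a b w x z ≤
      (ENNReal.ofReal (max (height a b v x) (height a b w x)))⁻¹ := by
  have hle (v w : List ℕ) : ∫⁻ z, stripDensity a b v x z * stripDensity a b w x z ≤
      (ENNReal.ofReal (height a b v x))⁻¹ := by
    calc ∫⁻ z, stripDensity a b v x z * stripDensity a b w x z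
        ≤ ∫⁻ z, (ENNReal.ofReal (height a b v x))⁻¹ * stripDensity a b w x z := by
          gcongr; exact stripDensity_le_inv_height v x _
      _ = (ENNReal.ofReal (height a b v x))⁻¹ := by
          rw [lintegral_const_mul _ (by fun_prop), lintegral_stripDensity hb hba w hx, mul_one]
  rcases max_choice (height a b v x) (height a b w x) with h | h <;> rw [h]
  · exact hle v w
  · simpa only [mul_comm] using hle w v

lemma stripDensity_mul_eq_zero {v w : List ℕ}
    (h : max (height a b v x) (height a b w x) < |lower a b v x - lower a b w x|) (z : ℝ) :
    stripDensity a b v x z * stripDensity a b w x z = 0 := by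
  obtain ⟨hv, hw⟩ := max_lt_iff.1 h
  by_cases hzv : z ∈ slice a b v x
  · have hzw : z ∉ slice a b w x := fun hzw => by
      rcases lt_abs.1 hv with hv | hv <;> rcases lt_abs.1 hw with hw | hw <;>
        linarith [hzv.1, hzv.2, hzw.1, hzw.2]
    rw [stripDensity, stripDensity, indicator_of_notMem hzw, mul_zero, mul_zero]
  · rw [stripDensity, indicator_of_notMem hzv, mul_zero, zero_mul]

lemma lintegral_stripDensity_mul_le_indicator (hb : 0 < b) (hba : b ≤ a) (v w : List ℕ)
    (hx : x ∈ Icc (0 : ℝ) 1) :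
    ∫⁻ z, stripDensity a b v x z * stripDensity a b w x z ≤
      {u | |lower a b v u - lower a b w u| ≤ max (height a b v 0) (height a b w 0)}.indicator
        (fun _ => ENNReal.ofReal (distortion a b / max (height a b v 0) (height a b w 0))) x := by
  set m := max (height a b v 0) (height a b w 0)
  set h := max (height a b v x) (height a b w x)
  have hh : 0 < h := lt_max_of_lt_left (height_pos hb hba v hx)
  have hmono (v : List ℕ) : height a b v x ≤ height a b v 0 :=
    height_antitone hb hba v unitInterval.zero_mem hx hx.1
  have hhm : h ≤ m := max_le_max (hmono v) (hmono w)
  have hmh : m ≤ distortion a b * h := by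
    rw [mul_max_of_nonneg _ _ (distortion_pos a b).le]
    exact max_le_max (height_zero_le_distortion_mul hb hba v hx)
      (height_zero_le_distortion_mul hb hba w hx)
  by_cases hclose : |lower a b v x - lower a b w x| ≤ m
  · rw [indicator_of_mem (by exact hclose)]
    refine (lintegral_stripDensity_mul_le hb hba v w hx).trans ?_
    rw [← ENNReal.ofReal_inv_of_pos hh]
    refine ENNReal.ofReal_le_ofReal ?_
    rwa [le_div_iff₀ (hh.trans_le hhm), inv_mul_le_iff₀' hh]
  · simp only [stripDensity_mul_eq_zero (hhm.trans_lt (not_le.1 hclose)), lintegral_zero, zero_le]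

lemma setLIntegral_stripDensity_mul_le (hb : 0 < b) (hba : b ≤ a) {s : Set ℝ}
    (hs : MeasurableSet s) (hs01 : s ⊆ Icc 0 1) {c : ℝ} {v w : List ℕ}
    (hclose : ∀ m, volume {u ∈ s | |lower a b v u - lower a b w u| ≤ m} ≤ ENNReal.ofReal (c * m)) :
    ∫⁻ u in s, ∫⁻ z, stripDensity a b v u z * stripDensity a b w u z ≤
      ENNReal.ofReal (distortion a b * c) := by
  set m := max (height a b v 0) (height a b w 0)
  have hm : 0 < m := lt_max_of_lt_left (height_pos hb hba v unitInterval.zero_mem)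
  have hmeas : MeasurableSet {u | |lower a b v u - lower a b w u| ≤ m} :=
    measurableSet_le (by fun_prop) measurable_const
  calc ∫⁻ u in s, ∫⁻ z, stripDensity a b v u z * stripDensity a b w u z
      ≤ ∫⁻ u in s, {u | |lower a b v u - lower a b w u| ≤ m}.indicator
          (fun _ => ENNReal.ofReal (distortion a b / m)) u :=
        setLIntegral_mono' hs fun u hu =>
          lintegral_stripDensity_mul_le_indicator hb hba v w (hs01 hu)
    _ = ENNReal.ofReal (distortion a b / m) *
          volume {u ∈ s | |lower a b v u - lower a b w u| ≤ m} := by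
        rw [lintegral_indicator_const hmeas, Measure.restrict_apply hmeas, inter_comm]; rfl
    _ ≤ ENNReal.ofReal (distortion a b / m) * ENNReal.ofReal (c * m) := by grw [hclose m]
    _ = ENNReal.ofReal (distortion a b * c) := by
        rw [← ENNReal.ofReal_mul (div_nonneg (distortion_pos a b).le hm.le)]
        congr 1
        field_simp

lemma setLIntegral_crossEnergy_le (hb : 0 < b) (hba : b ≤ a) {s : Set ℝ}
    (hs : MeasurableSet s) (hs01 : s ⊆ Icc 0 1) {c : ℝ}
    (hclose : ∀ v w m, volume {u ∈ s | |lower a b (1 :: v) u - lower a b (2 :: w) u| ≤ m} ≤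
      ENNReal.ofReal (c * m)) (n : ℕ) :
    ∫⁻ u in s, crossEnergy a b n u ≤ ENNReal.ofReal (distortion a b * c) := by
  have hmeas (v w : List ℕ) : Measurable fun u : ℝ =>
      ∫⁻ z, stripDensity a b (1 :: v) u z * stripDensity a b (2 :: w) u z :=
    Measurable.lintegral_prod_right
      (f := fun u z => stripDensity a b (1 :: v) u z * stripDensity a b (2 :: w) u z) (by fun_prop)
  have hexpand (u : ℝ) : crossEnergy a b n u = 2⁻¹ ^ (n + 1) * 2⁻¹ ^ (n + 1) *
      ∑ v ∈ words n, ∑ w ∈ words n,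
        ∫⁻ z, stripDensity a b (1 :: v) u z * stripDensity a b (2 :: w) u z := by
    simp_rw [crossEnergy, branchDensity, mul_mul_mul_comm, Finset.sum_mul_sum]
    rw [lintegral_const_mul _ (by fun_prop), lintegral_finsetSum _ (by fun_prop)]
    exact congrArg _ (Finset.sum_congr rfl fun v _ => lintegral_finsetSum _ (by fun_prop))
  calc ∫⁻ u in s, crossEnergy a b n u
      = 2⁻¹ ^ (n + 1) * 2⁻¹ ^ (n + 1) * ∑ v ∈ words n, ∑ w ∈ words n,
          ∫⁻ u in s, ∫⁻ z, stripDensity a b (1 :: v) u z * stripDensity a b (2 :: w) u z := by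
        simp_rw [hexpand]
        rw [lintegral_const_mul _ (by fun_prop), lintegral_finsetSum _ (by fun_prop)]
        exact congrArg _ <| Finset.sum_congr rfl fun v _ =>
          lintegral_finsetSum _ fun w _ => hmeas v w
    _ ≤ 2⁻¹ ^ (n + 1) * 2⁻¹ ^ (n + 1) * ∑ _v ∈ words n, ∑ _w ∈ words n,
          ENNReal.ofReal (distortion a b * c) := by
        gcongr with v _ w _
        exact setLIntegral_stripDensity_mul_le hb hba hs hs01 (hclose v w)
    _ = ENNReal.ofReal (distortion a b * c) * ((2⁻¹ ^ n * 2 ^ n) * (2⁻¹ ^ n * 2 ^ n))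
          * (2⁻¹ * 2⁻¹) := by
        simp only [Finset.sum_const, card_words, nsmul_eq_mul, Nat.cast_pow, Nat.cast_ofNat]
        ring
    _ ≤ ENNReal.ofReal (distortion a b * c) := by
        rw [← mul_pow, ENNReal.inv_mul_cancel two_ne_zero ENNReal.ofNat_ne_top, one_pow, mul_one,
          mul_one]
        exact mul_le_of_le_one_right' (mul_le_one' (by simp) (by simp))

end Energy

/-- The weight of the energy at the parameter `u`. -/
def energyWeight (u₀ R u : ℝ) : ℝ := if u ≤ u₀ then 1 else R

/-- The energy at level `n`, averaged over `[0,1]` with the weight `energyWeight u₀ R`. -/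
def weightedEnergy (a b u₀ R : ℝ) (n : ℕ) : ℝ≥0∞ :=
  ∫⁻ u in Ioc 0 1, ENNReal.ofReal (energyWeight u₀ R u) * energy a b n u

section WeightedEnergy

variable {a b u₀ R κ d u : ℝ}

lemma invBranch_one (x : ℝ) : invBranch 1 x = x / 2 := by rw [invBranch, digit_one, add_zero]

lemma invBranch_two (x : ℝ) : invBranch 2 x = (x + 1) / 2 := by rw [invBranch, digit_two]

lemma energyWeight_of_le (h : u ≤ u₀) : energyWeight u₀ R u = 1 := if_pos h

lemma energyWeight_of_lt (h : u₀ < u) : energyWeight u₀ R u = R := if_neg (not_le.2 h)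

@[fun_prop]
lemma measurable_energyWeight : Measurable (energyWeight u₀ R) :=
  Measurable.ite measurableSet_Iic measurable_const measurable_const

lemma one_le_energyWeight (hR : 1 ≤ R) : 1 ≤ energyWeight u₀ R u := by
  unfold energyWeight; split_ifs <;> simp [hR]

lemma energyWeight_le (hR : 1 ≤ R) : energyWeight u₀ R u ≤ R := by
  unfold energyWeight; split_ifs <;> simp [hR]

lemma ofReal_mul_inv_four_mul_mul_le {α β r : ℝ} (hα : 0 ≤ α) (hκ : 0 ≤ κ) (hr : 0 < r)
    (h : α ≤ 2 * κ * r * β) (x : ℝ≥0∞) :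
    ENNReal.ofReal α * (ENNReal.ofReal (4 * r)⁻¹ * x) ≤
      ENNReal.ofReal (κ / 2) * (ENNReal.ofReal β * x) := by
  rw [← mul_assoc, ← mul_assoc, ← ENNReal.ofReal_mul hα, ← ENNReal.ofReal_mul (by positivity)]
  refine mul_le_mul_left (ENNReal.ofReal_le_ofReal ?_) x
  rw [← div_eq_mul_inv, div_le_iff₀ (by positivity)]
  linarith

lemma energy_succ_le_of_le (hr : 0 < rate a b u) (hw : EnergyWeights a b u₀ R κ d) (n : ℕ)
    (hu : u ∈ Icc (0 : ℝ) 1) (hle : u ≤ u₀) :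
    energy a b (n + 1) u ≤ ENNReal.ofReal (κ / 2) *
      (ENNReal.ofReal (energyWeight u₀ R (u / 2)) * energy a b n (u / 2) +
        ENNReal.ofReal (energyWeight u₀ R ((u + 1) / 2)) * energy a b n ((u + 1) / 2)) := by
  have hR : 0 < R := one_pos.trans_le hw.one_le
  have hyoung := hw.one_add_inv_le u hu hle
  have hinv : ENNReal.ofReal R * ENNReal.ofReal R⁻¹ = 1 := by
    rw [← ENNReal.ofReal_mul hR.le, mul_inv_cancel₀ hR.ne', ENNReal.ofReal_one]
  rw [energyWeight_of_le (by linarith [hu.1]),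
    energyWeight_of_lt (by linarith [hu.1, hw.lt_half])]
  calc energy a b (n + 1) u
      ≤ (∫⁻ z, branchDensity a b n 1 u z ^ 2) +
          (ENNReal.ofReal R⁻¹ * (∫⁻ z, branchDensity a b n 1 u z ^ 2) +
            ENNReal.ofReal R * ∫⁻ z, branchDensity a b n 2 u z ^ 2) +
          ∫⁻ z, branchDensity a b n 2 u z ^ 2 := by
        grw [energy_succ, two_mul_crossEnergy_le hinv]
    _ = ENNReal.ofReal (1 + R⁻¹) * (ENNReal.ofReal (4 * rate a b u)⁻¹ * energy a b n (u / 2)) +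
          ENNReal.ofReal (1 + R) *
            (ENNReal.ofReal (4 * rate a b u)⁻¹ * energy a b n ((u + 1) / 2)) := by
        rw [lintegral_branchDensity_sq hr, lintegral_branchDensity_sq hr, invBranch_one,
          invBranch_two, ENNReal.ofReal_add zero_le_one (by positivity),
          ENNReal.ofReal_add zero_le_one hR.le, ENNReal.ofReal_one]
        ring
    _ ≤ _ := by
        rw [mul_add]
        gcongr ?_ + ?_
        · exact ofReal_mul_inv_four_mul_mul_le (by positivity) hw.pos.le hr (by linarith) _
        · refine ofReal_mul_inv_four_mul_mul_le (by positivity) hw.pos.le hr ?_ _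
          calc 1 + R = (1 + R⁻¹) * R := by rw [add_mul, inv_mul_cancel₀ hR.ne']; ring
            _ ≤ 2 * κ * rate a b u * R := by gcongr

lemma mul_energy_succ_le (hr : 0 < rate a b u) (hw : EnergyWeights a b u₀ R κ d) (n : ℕ)
    (hu : u ∈ Icc (0 : ℝ) 1) :
    ENNReal.ofReal R * energy a b (n + 1) u ≤ ENNReal.ofReal (κ / 2) *
      (ENNReal.ofReal (energyWeight u₀ R (u / 2)) * energy a b n (u / 2) +
        ENNReal.ofReal (energyWeight u₀ R ((u + 1) / 2)) * energy a b n ((u + 1) / 2)) +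
      ENNReal.ofReal R * (2 * crossEnergy a b n u) := by
  have hR : 0 < R := one_pos.trans_le hw.one_le
  have hone : R ≤ 2 * κ * rate a b u * R := le_mul_of_one_le_left hR.le (hw.one_le_rate u hu)
  have hfirst : R ≤ 2 * κ * rate a b u * energyWeight u₀ R (u / 2) := by
    rcases le_or_gt (u / 2) u₀ with h | h
    · rw [energyWeight_of_le h, mul_one]; exact hw.ratio_le u hu h
    · rwa [energyWeight_of_lt h]
  have hsecond : R ≤ 2 * κ * rate a b u * energyWeight u₀ R ((u + 1) / 2) := by
    rwa [energyWeight_of_lt (by linarith [hu.1, hw.lt_half])]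
  rw [energy_succ, add_right_comm, mul_add, mul_add, lintegral_branchDensity_sq hr,
    lintegral_branchDensity_sq hr, invBranch_one, invBranch_two, mul_add]
  gcongr ?_ + ?_ + _
  · exact ofReal_mul_inv_four_mul_mul_le hR.le hw.pos.le hr hfirst _
  · exact ofReal_mul_inv_four_mul_mul_le hR.le hw.pos.le hr hsecond _

lemma weightedEnergy_zero_le (hR : 1 ≤ R) : weightedEnergy a b u₀ R 0 ≤ ENNReal.ofReal R := by
  calc weightedEnergy a b u₀ R 0 ≤ ∫⁻ _ in Ioc (0 : ℝ) 1, ENNReal.ofReal R := by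
        unfold weightedEnergy
        simp only [energy_zero, mul_one]
        gcongr
        exact energyWeight_le hR
    _ = ENNReal.ofReal R := by simp

lemma lintegral_energy_le_weightedEnergy (hR : 1 ≤ R) (n : ℕ) :
    ∫⁻ u in Ioc (0 : ℝ) 1, energy a b n u ≤ weightedEnergy a b u₀ R n :=
  lintegral_mono fun _ => le_mul_of_one_le_left' <| by
    simpa using ENNReal.ofReal_le_ofReal (one_le_energyWeight hR)

lemma weightedEnergy_succ_le (hb : 0 < b) (hba : b ≤ a) (hw : EnergyWeights a b u₀ R κ d)
    {c : ℝ} (hcross : ∀ n, ∫⁻ u in Icc 0 1 ∩ Ioi u₀, crossEnergy a b n u ≤ ENNReal.ofReal c)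
    (n : ℕ) : weightedEnergy a b u₀ R (n + 1) ≤
      ENNReal.ofReal κ * weightedEnergy a b u₀ R n +
        ENNReal.ofReal R * (2 * ENNReal.ofReal c) := by
  set G : ℝ → ℝ≥0∞ := fun u => ENNReal.ofReal (energyWeight u₀ R u) * energy a b n u
  have hGmeas : Measurable G := by fun_prop
  set X : ℝ → ℝ≥0∞ := (Icc 0 1 ∩ Ioi u₀).indicator (crossEnergy a b n) with hX
  have hXmeas : Measurable X :=
    (measurable_crossEnergy n).indicator (measurableSet_Icc.inter measurableSet_Ioi)
  have hpoint : ∀ u ∈ Ioc (0 : ℝ) 1, ENNReal.ofReal (energyWeight u₀ R u) * energy a b (n + 1) u ≤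
      ENNReal.ofReal (κ / 2) * (G (u / 2) + G ((u + 1) / 2)) + ENNReal.ofReal R * (2 * X u) := by
    intro u hu
    have hu' := Ioc_subset_Icc_self hu
    have hr := rate_pos hb hba hu'
    rcases le_or_gt u u₀ with h | h
    · rw [energyWeight_of_le h, ENNReal.ofReal_one, one_mul]
      exact (energy_succ_le_of_le hr hw n hu' h).trans le_self_add
    · rw [energyWeight_of_lt h, hX, indicator_of_mem (show u ∈ Icc 0 1 ∩ Ioi u₀ from ⟨hu', h⟩)]
      exact mul_energy_succ_le hr hw n hu'
  calc weightedEnergy a b u₀ R (n + 1)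
      ≤ ∫⁻ u in Ioc (0 : ℝ) 1, (ENNReal.ofReal (κ / 2) * (G (u / 2) + G ((u + 1) / 2)) +
          ENNReal.ofReal R * (2 * X u)) := setLIntegral_mono' measurableSet_Ioc hpoint
    _ = ENNReal.ofReal (κ / 2) * (2 * ∫⁻ u in Ioc (0 : ℝ) 1, G u) +
          ENNReal.ofReal R * (2 * ∫⁻ u in Ioc (0 : ℝ) 1, X u) := by
        rw [lintegral_add_right _ (by fun_prop), lintegral_const_mul _ (by fun_prop),
          lintegral_const_mul _ (by fun_prop), lintegral_const_mul _ hXmeas,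
          lintegral_Ioc_comp_half_add hGmeas]
    _ ≤ ENNReal.ofReal κ * weightedEnergy a b u₀ R n +
          ENNReal.ofReal R * (2 * ENNReal.ofReal c) := by
        gcongr ?_ + _ * (_ * ?_)
        · rw [← mul_assoc, ← ENNReal.ofReal_ofNat 2, ← ENNReal.ofReal_mul (by linarith [hw.pos]),
            div_mul_cancel₀ _ two_ne_zero, weightedEnergy]
        · refine (setLIntegral_le_lintegral _ _).trans (le_trans (le_of_eq ?_) (hcross n))
          exact lintegral_indicator (measurableSet_Icc.inter measurableSet_Ioi) _

lemma exists_lintegral_energy_le (hb : 1 / 2 < b) (hba : b < a) (ha : a < 1) :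
    ∃ B < ∞, ∀ n, ∫⁻ u in Ioc (0 : ℝ) 1, energy a b n u ≤ B := by
  have hb0 : 0 < b := by linarith
  obtain ⟨u₀, R, κ, d, hw⟩ := exists_energyWeights hb hba ha
  obtain ⟨c, hclose⟩ := exists_volume_lower_sub_le hb0 hba ha hw.slope_pos hw.le_slope
  have hcross (n : ℕ) : ∫⁻ u in Icc 0 1 ∩ Ioi u₀, crossEnergy a b n u ≤
      ENNReal.ofReal (distortion a b * c) :=
    setLIntegral_crossEnergy_le hb0 hba.le (measurableSet_Icc.inter measurableSet_Ioi)
      inter_subset_left hclose n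
  have hκ : ENNReal.ofReal κ < 1 := ENNReal.ofReal_lt_one.2 hw.lt_one
  refine ⟨ENNReal.ofReal R +
    ENNReal.ofReal R * (2 * ENNReal.ofReal (distortion a b * c)) * (1 - ENNReal.ofReal κ)⁻¹,
    ?_, fun n => ?_⟩
  · have := ENNReal.inv_ne_top.2 (tsub_pos_of_lt hκ).ne'
    finiteness
  · calc ∫⁻ u in Ioc (0 : ℝ) 1, energy a b n u ≤ weightedEnergy a b u₀ R n :=
          lintegral_energy_le_weightedEnergy hw.one_le n
      _ ≤ _ := le_of_le_mul_add hκ (weightedEnergy_succ_le hb0 hba.le hw hcross) n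
      _ ≤ _ := by grw [weightedEnergy_zero_le hw.one_le]

end WeightedEnergy

/-! ### Geometry of the strips -/

lemma Fbr_invBranch (a b : ℝ) (i : ℕ) (x y : ℝ) :
    Fbr a b i (invBranch i x, y) = (x, rate a b x * y + offset a b i * x) := by
  match i with
  | 1 =>
    simp only [Fbr, invBranch, rate, offset, digit_one, Prod.mk.injEq]
    constructor <;> ring
  | 0 | n + 2 =>
    simp only [Fbr, invBranch, rate, offset, digit, Nat.reduceEqDiff, zero_ne_one, if_false,
      Prod.mk.injEq]
    constructor <;> ring

lemma invBranch_Fbr_fst (a b : ℝ) (i : ℕ) (p : Pt) : invBranch i (Fbr a b i p).1 = p.1 := by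
  match i with
  | 1 => simp only [Fbr, invBranch, digit_one]; ring
  | 0 | n + 2 =>
    simp only [Fbr, invBranch, digit, Nat.reduceEqDiff, zero_ne_one, if_false]; ring

lemma mem_Sbr_iff (a b : ℝ) (i : ℕ) (p : Pt) :
    p ∈ Sbr i ↔ (Fbr a b i p).1 ∈ Icc (0 : ℝ) 1 ∧ p.2 ∈ Icc (0 : ℝ) 1 := by
  match i with
  | 1 | 0 | n + 2 =>
    simp only [Sbr, Fbr, mem_prod, mem_Icc]
    constructor <;> rintro ⟨⟨h0, h1⟩, hy⟩ <;> refine ⟨⟨?_, ?_⟩, hy⟩ <;> linarith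

lemma Sbr_subset_unitSq (i : ℕ) : Sbr i ⊆ unitSq := fun p hp => by
  have hp := (mem_Sbr_iff 1 1 i p).1 hp
  exact ⟨invBranch_Fbr_fst 1 1 i p ▸ invBranch_mem_Icc i hp.1, hp.2⟩

lemma wordF_concat (a b : ℝ) (w : List ℕ) (i : ℕ) :
    wordF a b (w ++ [i]) = Fbr a b i ∘ wordF a b w := by
  induction w with
  | nil => rfl
  | cons j w ih => rw [List.cons_append, wordF, ih, wordF, Function.comp_assoc]

lemma wordS_concat (a b : ℝ) (w : List ℕ) (i : ℕ) :
    wordS a b (w ++ [i]) = wordS a b w ∩ wordF a b w ⁻¹' Sbr i := by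
  induction w with
  | nil => exact (inter_eq_self_of_subset_right (Sbr_subset_unitSq i)).symm
  | cons j w ih =>
    match w, ih with
    | [], _ => rfl
    | k :: w, ih =>
      calc wordS a b (j :: k :: w ++ [i])
          = Sbr j ∩ Fbr a b j ⁻¹' (wordS a b (k :: w) ∩ wordF a b (k :: w) ⁻¹' Sbr i) := by
            rw [← ih]; rfl
        _ = wordS a b (j :: k :: w) ∩ wordF a b (j :: k :: w) ⁻¹' Sbr i :=
            (inter_assoc _ _ _).symm

lemma wordU_concat (a b : ℝ) (w : List ℕ) (i : ℕ) :
    wordU a b (w ++ [i]) = Fbr a b i '' (wordU a b w ∩ Sbr i) := by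
  rw [wordU, wordS_concat, wordF_concat, image_comp, image_inter_preimage, wordU]

lemma Fbr_fst_mem_IWord (a b : ℝ) (i : ℕ) (w : List ℕ) {p : Pt} (hp : p ∈ wordS a b (i :: w)) :
    (Fbr a b i p).1 ∈ IWord a b w := by
  match w with
  | [] => exact ⟨((Fbr a b i p).1, p.2), (mem_Sbr_iff a b i p).1 hp, rfl⟩
  | _ :: _ => exact mem_image_of_mem _ hp.2

lemma exists_IWord_subset_Icc (a b : ℝ) (w : List ℕ) :
    ∃ c, IWord a b w ⊆ Icc c (c + 2⁻¹ ^ w.length) := by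
  induction w with
  | nil =>
    refine ⟨0, ?_⟩
    rintro _ ⟨p, hp, rfl⟩
    simpa using hp.1
  | cons i w ih =>
    obtain ⟨c, hc⟩ := ih
    refine ⟨invBranch i c, ?_⟩
    rintro _ ⟨p, hp, rfl⟩
    obtain ⟨hlower, hupper⟩ := hc (Fbr_fst_mem_IWord a b i w hp)
    rw [← invBranch_Fbr_fst a b i p, List.length_cons, pow_succ]
    unfold invBranch
    constructor <;> linarith

lemma volume_IWord_le (a b : ℝ) (w : List ℕ) : volume (IWord a b w) ≤ 2⁻¹ ^ w.length := by
  obtain ⟨c, hc⟩ := exists_IWord_subset_Icc a b w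
  refine (measure_mono hc).trans_eq ?_
  rw [Real.volume_Icc, add_sub_cancel_left, ENNReal.ofReal_pow (by norm_num),
    ENNReal.ofReal_inv_of_pos two_pos, ENNReal.ofReal_ofNat]

section Slices

variable {a b x : ℝ}

lemma slice_subset_Icc (hb : 0 ≤ b) (hba : b ≤ a) (ha : a ≤ 1) (v : List ℕ)
    (hx : x ∈ Icc (0 : ℝ) 1) : slice a b v x ⊆ Icc 0 1 :=
  Icc_subset_Icc (lower_nonneg hb hba ha v hx) (lower_add_height_le hb hba ha v hx)

lemma slice_append_subset (hb : 0 < b) (hba : b ≤ a) (ha : a ≤ 1) (v w : List ℕ)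
    (hx : x ∈ Icc (0 : ℝ) 1) : slice a b (v ++ w) x ⊆ slice a b v x := by
  obtain ⟨y, hy, hheight, hlower⟩ := exists_lower_height_append (a := a) (b := b) v w hx
  have hv := (height_pos hb hba v hx).le
  rw [slice, slice, hheight, hlower, add_assoc, ← mul_add]
  gcongr
  · exact le_add_of_nonneg_right (mul_nonneg hv (lower_nonneg hb.le hba ha w hy))
  · exact mul_le_of_le_one_right hv (lower_add_height_le hb.le hba ha w hy)

lemma mem_wordU (hb : 0 < b) (hba : b ≤ a) (ha : a ≤ 1) (w : List ℕ) (x y : ℝ) :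
    (x, y) ∈ wordU a b w ↔ x ∈ Icc (0 : ℝ) 1 ∧ y ∈ slice a b w.reverse x := by
  induction w using List.reverseRecOn generalizing x y with
  | nil =>
    simp only [wordU, wordF, wordS, image_id, unitSq, mem_prod, List.reverse_nil, slice, lower,
      height, zero_add]
  | append_singleton w i ih =>
    rw [wordU_concat, List.reverse_append, List.reverse_singleton, List.singleton_append]
    constructor
    · rintro ⟨⟨s, t⟩, ⟨hst, hS⟩, himage⟩
      have hx := ((mem_Sbr_iff a b i _).1 hS).1
      obtain rfl : s = invBranch i x := by
        simpa only [himage] using (invBranch_Fbr_fst a b i (s, t)).symm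
      rw [Fbr_invBranch, Prod.mk.injEq] at himage
      rw [Fbr_invBranch] at hx
      rw [← himage.2, mem_slice_cons (rate_pos hb hba hx)]
      exact ⟨hx, ((ih _ _).1 hst).2⟩
    · rintro ⟨hx, hy⟩
      have hrate := rate_pos hb hba hx
      obtain ⟨t, rfl⟩ : ∃ t, y = rate a b x * t + offset a b i * x :=
        ⟨(y - offset a b i * x) / rate a b x, by field_simp; ring⟩
      rw [mem_slice_cons hrate] at hy
      have hp := invBranch_mem_Icc i hx
      refine ⟨(invBranch i x, t), ⟨(ih _ _).2 ⟨hp, hy⟩, ?_⟩, Fbr_invBranch a b i x t⟩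
      rw [mem_Sbr_iff a b, Fbr_invBranch]
      exact ⟨hx, slice_subset_Icc hb.le hba ha _ hp hy⟩

lemma measurableSet_wordU (hb : 0 < b) (hba : b ≤ a) (ha : a ≤ 1) (w : List ℕ) :
    MeasurableSet (wordU a b w) := by
  have heq : wordU a b w = {p | p.1 ∈ Icc (0 : ℝ) 1} ∩
      ({p | lower a b w.reverse p.1 ≤ p.2} ∩
        {p | p.2 ≤ lower a b w.reverse p.1 + height a b w.reverse p.1}) := by
    ext ⟨x, y⟩
    exact mem_wordU hb hba ha w x y
  rw [heq]
  exact (measurable_fst measurableSet_Icc).inter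
    ((measurableSet_le (by fun_prop) measurable_snd).inter
      (measurableSet_le measurable_snd (by fun_prop)))

lemma len_wordU_inter (hb : 0 < b) (hba : b ≤ a) (ha : a ≤ 1) (w : List ℕ)
    (hx : x ∈ Icc (0 : ℝ) 1) :
    len (wordU a b w ∩ Ws x) = ENNReal.ofReal (height a b w.reverse x) := by
  have heq : wordU a b w ∩ Ws x = Prod.mk x '' slice a b w.reverse x := by
    ext ⟨s, y⟩
    simp only [mem_inter_iff, mem_wordU hb hba ha, Ws, mem_prod, mem_singleton_iff, mem_image,
      Prod.mk.injEq, exists_eq_right_right]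
    constructor
    · rintro ⟨⟨_, hy⟩, rfl, _⟩
      exact ⟨hy, rfl⟩
    · rintro ⟨hy, rfl⟩
      exact ⟨⟨hx, hy⟩, rfl, slice_subset_Icc hb.le hba ha _ hx hy⟩
  have hisometry : Isometry (Prod.mk x : ℝ → ℝ × ℝ) :=
    Isometry.of_dist_eq fun y z => by simp [Prod.dist_eq]
  rw [len, heq, hisometry.hausdorffMeasure_image (Or.inl zero_le_one), hausdorffMeasure_real,
    slice, Real.volume_Icc, add_sub_cancel_left]

lemma dW_eq (hb : 0 < b) (hba : b ≤ a) (ha : a ≤ 1) (w : List ℕ) :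
    dW a b w = ENNReal.ofReal (height a b w.reverse 0) := by
  refine le_antisymm (iSup₂_le fun x hx => ?_) ?_
  · rw [len_wordU_inter hb hba ha w hx]
    exact ENNReal.ofReal_le_ofReal (height_antitone hb hba _ unitInterval.zero_mem hx hx.1)
  · rw [← len_wordU_inter hb hba ha w unitInterval.zero_mem]
    exact le_iSup₂ (f := fun x _ => len (wordU a b w ∩ Ws x)) 0 unitInterval.zero_mem

end Slices

/-! ### The words of `M(r)` -/

/-- The heights of the strips of `M(r)` are at most `heightRatio a b * r`. -/
def heightRatio (a b : ℝ) : ℝ := distortion a b / a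

section Mset

variable {a b r x : ℝ} {w : List ℕ}

lemma heightRatio_pos (ha : 0 < a) : 0 < heightRatio a b := div_pos (distortion_pos a b) ha

lemma eq_one_or_two_of_mem_Mset (hw : w ∈ Mset a b r) {i : ℕ} (hi : i ∈ w) : i = 1 ∨ i = 2 := by
  obtain ⟨A, hA, n, rfl, -⟩ := hw
  obtain ⟨k, rfl⟩ := List.mem_ofFn.1 hi
  exact hA k

lemma le_height_of_mem_Mset (hb : 0 < b) (hba : b ≤ a) (ha : a ≤ 1) (hw : w ∈ Mset a b r) :
    r ≤ height a b w.reverse 0 := by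
  obtain ⟨-, -, -, -, hr, -⟩ := hw
  rw [dW_eq hb hba ha] at hr
  exact (ENNReal.ofReal_le_ofReal_iff (height_pos hb hba _ unitInterval.zero_mem).le).1 hr

lemma exists_height_cons_lt_of_mem_Mset (hb : 0 < b) (hba : b ≤ a) (ha : a ≤ 1)
    (hr : 0 < r) (hw : w ∈ Mset a b r) : ∃ i, height a b (i :: w.reverse) 0 < r := by
  obtain ⟨A, -, n, rfl, -, hlt⟩ := hw
  have hprefix : prefixWord A (n + 2) = prefixWord A (n + 1) ++ [A (n + 1)] :=
    List.ofFn_succ_last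
  have hlt := hlt (n + 2) (by omega)
  rw [hprefix, dW_eq hb hba ha, List.reverse_append, List.reverse_singleton,
    List.singleton_append, ENNReal.ofReal_lt_ofReal_iff hr] at hlt
  exact ⟨_, hlt⟩

lemma height_le_of_mem_Mset (hb : 0 < b) (hba : b ≤ a) (ha : a ≤ 1) (hr : 0 < r)
    (hw : w ∈ Mset a b r) (hx : x ∈ Icc (0 : ℝ) 1) :
    height a b w.reverse x ≤ heightRatio a b * r := by
  obtain ⟨i, hi⟩ := exists_height_cons_lt_of_mem_Mset hb hba ha hr hw
  set y := invBranch i 0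
  have hrate : rate a b 0 = a := by simp [rate]
  have hy : height a b w.reverse y ≤ r / a := by
    rw [height, hrate] at hi
    exact (le_div_iff₀' (hb.trans_le hba)).2 hi.le
  calc height a b w.reverse x
      ≤ height a b w.reverse 0 := height_antitone hb hba _ unitInterval.zero_mem hx hx.1
    _ ≤ distortion a b * height a b w.reverse y :=
        height_zero_le_distortion_mul hb hba _ (invBranch_mem_Icc i unitInterval.zero_mem)
    _ ≤ distortion a b * (r / a) := mul_le_mul_of_nonneg_left hy (distortion_pos a b).le
    _ = heightRatio a b * r := by rw [heightRatio]; ring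

end Mset

/-! ### Counting the strips of `M(r)` through a point -/

lemma mem_words {n : ℕ} {v : List ℕ} :
    v ∈ words n ↔ v.length = n ∧ ∀ i ∈ v, i = 1 ∨ i = 2 := by
  induction n generalizing v with
  | zero => simp +contextual [words]
  | succ n ih =>
    cases v with
    | nil => simp [words]
    | cons i v => simp only [words, Finset.mem_union, Finset.mem_image, ih]; aesop

lemma sum_words_take {M : Type*} [AddCommMonoid M] (m k : ℕ) (φ : List ℕ → M) :
    ∑ v ∈ words (m + k), φ (v.take m) = 2 ^ k • ∑ u ∈ words m, φ u := by
  induction m generalizing φ with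
  | zero => simp [words, card_words]
  | succ m ih =>
    rw [Nat.add_right_comm, sum_words_succ, sum_words_succ]
    simp only [List.take_succ_cons]
    rw [ih fun u => φ (1 :: u), ih fun u => φ (2 :: u), smul_add]

lemma sum_words_eq_sum_words_take {m N : ℕ} (hm : m ≤ N) (c : List ℕ → ℝ≥0∞) :
    ∑ u ∈ words m, 2⁻¹ ^ u.length * c u = 2⁻¹ ^ N * ∑ v ∈ words N, c (v.take m) := by
  obtain ⟨k, rfl⟩ := Nat.exists_eq_add_of_le hm
  have hcancel : (2⁻¹ : ℝ≥0∞) ^ k * 2 ^ k = 1 := by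
    rw [← mul_pow, ENNReal.inv_mul_cancel two_ne_zero ENNReal.ofNat_ne_top, one_pow]
  calc ∑ u ∈ words m, 2⁻¹ ^ u.length * c u = 2⁻¹ ^ m * ∑ u ∈ words m, c u := by
        rw [Finset.mul_sum]
        exact Finset.sum_congr rfl fun u hu => by rw [(mem_words.1 hu).1]
    _ = 2⁻¹ ^ m * (2⁻¹ ^ k * 2 ^ k) * ∑ u ∈ words m, c u := by rw [hcancel, mul_one]
    _ = 2⁻¹ ^ (m + k) * ∑ v ∈ words (m + k), c (v.take m) := by
        rw [sum_words_take, nsmul_eq_mul]; push_cast; ring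

lemma tsum_eq_sum_words_take {N : ℕ} {c : List ℕ → ℝ≥0∞}
    (hc : ∀ u, c u ≠ 0 → u.length ≤ N ∧ ∀ i ∈ u, i = 1 ∨ i = 2) :
    ∑' u, 2⁻¹ ^ u.length * c u =
      2⁻¹ ^ N * ∑ v ∈ words N, ∑ m ∈ Finset.range (N + 1), c (v.take m) := by
  have hsupport : ∀ u ∉ (Finset.range (N + 1)).biUnion words, 2⁻¹ ^ u.length * c u = 0 := by
    intro u hu
    by_contra hne
    obtain ⟨hlength, hletters⟩ := hc u (right_ne_zero_of_mul hne)
    exact hu (Finset.mem_biUnion.2 ⟨u.length, Finset.mem_range_succ_iff.2 hlength,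
      mem_words.2 ⟨rfl, hletters⟩⟩)
  have hdisjoint : (Finset.range (N + 1) : Set ℕ).PairwiseDisjoint words := by
    intro m _ m' _ hne
    refine Finset.disjoint_left.2 fun u hu hu' => hne ?_
    rw [← (mem_words.1 hu).1, (mem_words.1 hu').1]
  rw [tsum_eq_sum hsupport, Finset.sum_biUnion hdisjoint, Finset.sum_comm, Finset.mul_sum]
  exact Finset.sum_congr rfl fun m hm =>
    sum_words_eq_sum_words_take (Finset.mem_range_succ_iff.1 hm) c

/-- The dyadic length of the interval of a word of `M(r)`; words outside `M(r)` get weight zero. -/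
def weight (a b r : ℝ) : List ℕ → ℝ≥0∞ := (Mset a b r).indicator fun w => 2⁻¹ ^ w.length

/-- The weighted number of strips of `M(r)` through a point. -/
def coverage (a b r : ℝ) (p : Pt) : ℝ≥0∞ :=
  ∑' w, weight a b r w * (wordU a b w).indicator 1 p

/-- The words of `M(r)`, listed from the newest symbol to the oldest one, whose strip contains the
point `(x, z)`. -/
def wordsThrough (a b r x z : ℝ) : Set (List ℕ) := {u | u.reverse ∈ Mset a b r ∧ z ∈ slice a b u x}

section Coverage

variable {a b r x z : ℝ}

lemma coverage_eq_tsum_wordsThrough (hb : 0 < b) (hba : b ≤ a) (ha : a ≤ 1)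
    (hx : x ∈ Icc (0 : ℝ) 1) :
    coverage a b r (x, z) = ∑' u, 2⁻¹ ^ u.length * (wordsThrough a b r x z).indicator 1 u := by
  rw [coverage, ← (List.reverse_involutive (α := ℕ)).toPerm.tsum_eq]
  refine tsum_congr fun u => ?_
  have hmem : (x, z) ∈ wordU a b u.reverse ↔ z ∈ slice a b u x := by
    rw [mem_wordU hb hba ha, List.reverse_reverse, and_iff_right hx]
  by_cases hu : u.reverse ∈ Mset a b r <;> by_cases hz : z ∈ slice a b u x <;>
    simp [weight, wordsThrough, indicator, hu, hz, hmem]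

lemma length_lt_of_append_mem_Mset (hb : 0 < b) (hba : b ≤ a) (ha : a ≤ 1) {K : ℕ}
    (hK : heightRatio a b * a ^ K < 1) (hr : 0 < r) {u w : List ℕ} (hu : u.reverse ∈ Mset a b r)
    (huw : (u ++ w).reverse ∈ Mset a b r) : w.length < K := by
  by_contra! hlength
  have ha0 := hb.trans_le hba
  obtain ⟨y, hy, hheight, -⟩ :=
    exists_lower_height_append (a := a) (b := b) u w unitInterval.zero_mem
  have hu := height_le_of_mem_Mset hb hba ha hr hu unitInterval.zero_mem
  have huw := le_height_of_mem_Mset hb hba ha huw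
  rw [List.reverse_reverse] at hu huw
  refine lt_irrefl r ?_
  calc r ≤ height a b u 0 * height a b w y := huw.trans_eq hheight
    _ ≤ heightRatio a b * r * a ^ K :=
        mul_le_mul hu ((height_le_pow hb hba w hy).trans (pow_le_pow_of_le_one ha0.le ha hlength))
          (height_pos hb hba w hy).le (mul_nonneg (heightRatio_pos ha0).le hr.le)
    _ = heightRatio a b * a ^ K * r := by ring
    _ < r := mul_lt_of_lt_one_left hr hK

lemma one_le_setLIntegral_stripDensity (hb : 0 < b) (hba : b ≤ a) (ha : a ≤ 1) (hr : 0 < r)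
    (hx : x ∈ Icc (0 : ℝ) 1) {u : List ℕ} (hu : u ∈ wordsThrough a b r x z) (w : List ℕ) :
    1 ≤ ∫⁻ t in Icc (-(heightRatio a b * r)) (heightRatio a b * r),
      stripDensity a b (u ++ w) x (z + t) := by
  have hheight := height_le_of_mem_Mset hb hba ha hr hu.1 hx
  rw [List.reverse_reverse] at hheight
  have hsupport : (Function.support fun t => stripDensity a b (u ++ w) x (z + t)) ⊆
      Icc (-(heightRatio a b * r)) (heightRatio a b * r) := by
    intro t ht
    have hzt : z + t ∈ slice a b u x := slice_append_subset hb hba ha u w hx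
      (mem_of_indicator_ne_zero (right_ne_zero_of_mul ht))
    constructor <;> linarith [hu.2.1, hu.2.2, hzt.1, hzt.2]
  rw [setLIntegral_eq_of_support_subset hsupport,
    lintegral_add_left_eq_self (fun t => stripDensity a b (u ++ w) x t),
    lintegral_stripDensity hb hba _ hx]

lemma sum_indicator_wordsThrough_take_le (hb : 0 < b) (hba : b ≤ a) (ha : a ≤ 1) {K : ℕ}
    (hK : heightRatio a b * a ^ K < 1) (hr : 0 < r) (hx : x ∈ Icc (0 : ℝ) 1) (v : List ℕ) :
    ∑ m ∈ Finset.range (v.length + 1), (wordsThrough a b r x z).indicator 1 (v.take m) ≤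
      K * ∫⁻ t in Icc (-(heightRatio a b * r)) (heightRatio a b * r),
        stripDensity a b v x (z + t) := by
  classical
  set s := {m ∈ Finset.range (v.length + 1) | v.take m ∈ wordsThrough a b r x z}
  have hsum : ∑ m ∈ Finset.range (v.length + 1), (wordsThrough a b r x z).indicator 1 (v.take m) =
      (s.card : ℝ≥0∞) := by
    simp only [indicator, Pi.one_apply, Finset.sum_boole, s]
  rw [hsum]
  rcases s.eq_empty_or_nonempty with hs | hs
  · simp [hs]
  obtain ⟨-, hmin⟩ := Finset.mem_filter.1 (s.min'_mem hs)
  set m₀ := s.min' hs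
  have hcard : s.card ≤ K := by
    have hsub : s ⊆ Finset.Ico m₀ (m₀ + K) := by
      intro m hm
      have hle : m₀ ≤ m := s.min'_le m hm
      obtain ⟨hmrange, hm⟩ := Finset.mem_filter.1 hm
      have hsplit : v.take m = v.take m₀ ++ (v.take m).drop m₀ := by
        conv_lhs => rw [← List.take_append_drop m₀ (v.take m), List.take_take, min_eq_left hle]
      have hlt := length_lt_of_append_mem_Mset hb hba ha hK hr hmin.1 (hsplit ▸ hm.1)
      rw [List.length_drop, List.length_take] at hlt
      rw [Finset.mem_range] at hmrange
      exact Finset.mem_Ico.2 ⟨hle, by omega⟩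
    simpa using Finset.card_le_card hsub
  have hone := one_le_setLIntegral_stripDensity hb hba ha hr hx hmin (v.drop m₀)
  rw [List.take_append_drop] at hone
  calc (s.card : ℝ≥0∞) ≤ K * 1 := by rw [mul_one]; exact_mod_cast hcard
    _ ≤ _ := by grw [← hone]

lemma length_le_of_mem_wordsThrough (hb : 0 < b) (hba : b ≤ a) (ha : a ≤ 1) {N : ℕ}
    (hN : a ^ N < r) {u : List ℕ} (hu : u ∈ wordsThrough a b r x z) : u.length ≤ N := by
  by_contra! hlt
  have hheight := le_height_of_mem_Mset hb hba ha hu.1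
  rw [List.reverse_reverse] at hheight
  exact absurd (hheight.trans (height_le_pow hb hba u unitInterval.zero_mem))
    (not_le.2 ((pow_le_pow_of_le_one (hb.le.trans hba) ha hlt.le).trans_lt hN))

lemma coverage_le (hb : 0 < b) (hba : b ≤ a) (ha : a ≤ 1) {K : ℕ}
    (hK : heightRatio a b * a ^ K < 1) (hr : 0 < r) {N : ℕ} (hN : a ^ N < r)
    (hx : x ∈ Icc (0 : ℝ) 1) (z : ℝ) :
    coverage a b r (x, z) ≤ K * ∫⁻ t in Icc (-(heightRatio a b * r)) (heightRatio a b * r),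
      density a b N x (z + t) := by
  set I := Icc (-(heightRatio a b * r)) (heightRatio a b * r)
  have hc (u : List ℕ) (hu : (wordsThrough a b r x z).indicator (1 : List ℕ → ℝ≥0∞) u ≠ 0) :
      u.length ≤ N ∧ ∀ i ∈ u, i = 1 ∨ i = 2 := by
    have hu := mem_of_indicator_ne_zero hu
    exact ⟨length_le_of_mem_wordsThrough hb hba ha hN hu,
      fun i hi => eq_one_or_two_of_mem_Mset hu.1 (List.mem_reverse.2 hi)⟩
  calc coverage a b r (x, z)
      = 2⁻¹ ^ N * ∑ v ∈ words N, ∑ m ∈ Finset.range (N + 1),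
          (wordsThrough a b r x z).indicator 1 (v.take m) := by
        rw [coverage_eq_tsum_wordsThrough hb hba ha hx, tsum_eq_sum_words_take hc]
    _ ≤ 2⁻¹ ^ N * ∑ v ∈ words N, K * ∫⁻ t in I, stripDensity a b v x (z + t) := by
        gcongr with v hv
        rw [← (mem_words.1 hv).1]
        exact sum_indicator_wordsThrough_take_le hb hba ha hK hr hx v
    _ = K * ∫⁻ t in I, density a b N x (z + t) := by
        simp only [density]
        rw [lintegral_const_mul _ (by fun_prop), lintegral_finsetSum _ fun v _ => by fun_prop,
          ← Finset.mul_sum]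
        ring

lemma measurable_coverage (hb : 0 < b) (hba : b ≤ a) (ha : a ≤ 1) (r : ℝ) :
    Measurable (coverage a b r) :=
  Measurable.tsum fun w =>
    (measurable_one.indicator (measurableSet_wordU hb hba ha w)).const_mul _

lemma lintegral_coverage_fibre_sq_le (hb : 0 < b) (hba : b ≤ a) (ha : a ≤ 1) {K : ℕ}
    (hK : heightRatio a b * a ^ K < 1) (hr : 0 < r) {N : ℕ} (hN : a ^ N < r)
    (hx : x ∈ Icc (0 : ℝ) 1) :
    ∫⁻ z, coverage a b r (x, z) ^ 2 ≤
      (K * ENNReal.ofReal (2 * heightRatio a b * r)) ^ 2 * energy a b N x := by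
  set I := Icc (-(heightRatio a b * r)) (heightRatio a b * r)
  have hI : volume I = ENNReal.ofReal (2 * heightRatio a b * r) := by
    rw [Real.volume_Icc]; ring_nf
  calc ∫⁻ z, coverage a b r (x, z) ^ 2
      ≤ ∫⁻ z, (K : ℝ≥0∞) ^ 2 * (volume I * ∫⁻ t in I, density a b N x (z + t) ^ 2) := by
        refine lintegral_mono fun z => ?_
        grw [coverage_le hb hba ha hK hr hN hx z, mul_pow, sq_lintegral_le (by fun_prop),
          Measure.restrict_apply_univ]
    _ = (K : ℝ≥0∞) ^ 2 * (volume I * (volume I * energy a b N x)) := by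
        rw [lintegral_const_mul' _ _ (by finiteness),
          lintegral_const_mul' _ _ measure_Icc_lt_top.ne,
          lintegral_setLIntegral_add (f := fun z => density a b N x z ^ 2) (by fun_prop), energy]
    _ = _ := by rw [hI]; ring

lemma lintegral_coverage_sq_le (hb : 0 < b) (hba : b ≤ a) (ha : a ≤ 1) {K : ℕ}
    (hK : heightRatio a b * a ^ K < 1) (hr : 0 < r) {N : ℕ} (hN : a ^ N < r) :
    ∫⁻ p, coverage a b r p ^ 2 ≤ (K * ENNReal.ofReal (2 * heightRatio a b * r)) ^ 2 *
      ∫⁻ x in Ioc (0 : ℝ) 1, energy a b N x := by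
  have hzero : ∀ x ∉ Icc (0 : ℝ) 1, ∫⁻ z, coverage a b r (x, z) ^ 2 = 0 := by
    intro x hx
    have (z : ℝ) : coverage a b r (x, z) = 0 := ENNReal.tsum_eq_zero.2 fun w => by
      rw [indicator_of_notMem fun h => hx ((mem_wordU hb hba ha w x z).1 h).1, mul_zero]
    simp [this]
  rw [Measure.volume_eq_prod,
    lintegral_prod _ ((measurable_coverage hb hba ha r).pow_const 2).aemeasurable,
    restrict_Ioc_eq_restrict_Icc, ← lintegral_const_mul _ (measurable_energy N),
    ← lintegral_indicator measurableSet_Icc]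
  refine lintegral_mono fun x => ?_
  by_cases hx : x ∈ Icc (0 : ℝ) 1
  · rw [indicator_of_mem hx]
    exact lintegral_coverage_fibre_sq_le hb hba ha hK hr hN hx
  · rw [hzero x hx]
    exact zero_le

lemma volume_mul_volume_IWord_le (hb : 0 < b) (hba : b ≤ a) (ha : a ≤ 1) {w v : List ℕ}
    (hw : w ∈ Mset a b r) (hv : v ∈ Mset a b r) :
    volume (wordU a b w ∩ wordU a b v) * volume (IWord a b w) * volume (IWord a b v) ≤
      ∫⁻ p, weight a b r w * (wordU a b w).indicator 1 p *
        (weight a b r v * (wordU a b v).indicator 1 p) := by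
  have hU := (measurableSet_wordU hb hba ha w).inter (measurableSet_wordU hb hba ha v)
  have hprod (p : Pt) : weight a b r w * (wordU a b w).indicator 1 p *
      (weight a b r v * (wordU a b v).indicator 1 p) =
      2⁻¹ ^ w.length * 2⁻¹ ^ v.length * (wordU a b w ∩ wordU a b v).indicator 1 p := by
    rw [inter_indicator_one, Pi.mul_apply, weight, indicator_of_mem hw, indicator_of_mem hv]
    ring
  simp_rw [hprod]
  rw [lintegral_const_mul _ (measurable_one.indicator hU), lintegral_indicator_one hU, mul_assoc,
    mul_comm]
  grw [volume_IWord_le, volume_IWord_le]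

lemma NTrSum_le_lintegral (hb : 0 < b) (hba : b ≤ a) (ha : a ≤ 1) (δ r : ℝ) :
    NTrSum a b δ r ≤ ∫⁻ p, coverage a b r p ^ 2 := by
  set f : List ℕ × List ℕ → Pt → ℝ≥0∞ := fun q p =>
    weight a b r q.1 * (wordU a b q.1).indicator 1 p *
      (weight a b r q.2 * (wordU a b q.2).indicator 1 p)
  have hmeas (q : List ℕ × List ℕ) : Measurable (f q) :=
    ((measurable_one.indicator (measurableSet_wordU hb hba ha q.1)).const_mul _).mul
      ((measurable_one.indicator (measurableSet_wordU hb hba ha q.2)).const_mul _)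
  have hsq (p : Pt) : coverage a b r p ^ 2 = ∑' q, f q p := by
    rw [ENNReal.tsum_prod (f := fun w v => f (w, v) p)]
    simp only [f, ENNReal.tsum_mul_left, ENNReal.tsum_mul_right]
    rw [sq, coverage]
  simp_rw [hsq]
  rw [lintegral_tsum fun q => (hmeas q).aemeasurable]
  refine ENNReal.tsum_le_tsum fun q => ?_
  split_ifs with hq
  · exact volume_mul_volume_IWord_le hb hba ha hq.1 hq.2.1
  · exact zero_le

end Coverage

theorem affine_example_transversality_general (a b : ℝ) (hb : 1 / 2 < b) (hba : b < a)
    (ha : a < 1) : ∃ C : ℝ≥0∞, C < ⊤ ∧ ∀ δ r : ℝ, 0 < r →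
      (ENNReal.ofReal r)⁻¹ ^ 2 * NTrSum a b δ r ≤ C := by
  have hb0 : 0 < b := one_half_pos.trans hb
  obtain ⟨B, hB, henergy⟩ := exists_lintegral_energy_le hb hba ha
  have hratio : 0 < heightRatio a b := heightRatio_pos (hb0.trans hba)
  obtain ⟨K, hK⟩ := exists_pow_lt_of_lt_one (inv_pos.2 hratio) ha
  have hK : heightRatio a b * a ^ K < 1 := by rwa [← lt_inv_mul_iff₀ hratio, mul_one]
  refine ⟨(K * ENNReal.ofReal (2 * heightRatio a b)) ^ 2 * B, by finiteness, fun δ r hr => ?_⟩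
  obtain ⟨N, hN⟩ := exists_pow_lt_of_lt_one hr ha
  have hcancel : (ENNReal.ofReal r)⁻¹ ^ 2 * ENNReal.ofReal r ^ 2 = 1 := by
    rw [← mul_pow, ENNReal.inv_mul_cancel (ENNReal.ofReal_pos.2 hr).ne' ENNReal.ofReal_ne_top,
      one_pow]
  calc (ENNReal.ofReal r)⁻¹ ^ 2 * NTrSum a b δ r
      ≤ (ENNReal.ofReal r)⁻¹ ^ 2 * ((K * ENNReal.ofReal (2 * heightRatio a b * r)) ^ 2 * B) := by
        grw [NTrSum_le_lintegral hb0 hba.le ha.le,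
          lintegral_coverage_sq_le hb0 hba.le ha.le hK hr hN, henergy N]
    _ = (ENNReal.ofReal r)⁻¹ ^ 2 * ENNReal.ofReal r ^ 2 *
          ((K * ENNReal.ofReal (2 * heightRatio a b)) ^ 2 * B) := by
        rw [ENNReal.ofReal_mul (by positivity : 0 ≤ 2 * heightRatio a b)]; ring
    _ = (K * ENNReal.ofReal (2 * heightRatio a b)) ^ 2 * B := by rw [hcancel, one_mul]

/-- The piecewise affine generalized horseshoe map with `1/2 < b < a < 1` satisfies the
transversality condition. -/
theorem affine_example_transversality (a b : ℝ) (hb : 1/2 < b) (hba : b < a) (ha : a < 1) :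
    ∃ δ > (0:ℝ),
      limsup (fun r : ℝ => (ENNReal.ofReal r)⁻¹ ^ 2 * NTrSum a b δ r) (𝓝[>] (0:ℝ)) < ⊤ := by
  obtain ⟨C, hC, hbound⟩ := affine_example_transversality_general a b hb hba ha
  refine ⟨1, one_pos, (limsup_le_of_le (by isBoundedDefault) ?_).trans_lt hC⟩
  filter_upwards [self_mem_nhdsWithin] with r hr using hbound 1 r hr

end AffineHorseshoe
end
end
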